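/- arXiv:2005.12009 — 4 statements merged into one kernel-verified Lean document; each statement's English description precedes it below -/
import Mathlib

section
/- For every m̄ ∈ ℕ, every c̄ ≥ 1 and every k ∈ ℕ there exists a constant C > 0 (depending only on m̄, c̄ and k) with the following property: for every compact interval [a,b], every mesh 𝒯 of [a,b] that is piecewise quasi-uniform with parameters (m̄, c̄), and every v ∈ 𝕊_k(𝒯), one has ∫_a^b ∫_a^b (v(x) − v(y))²/(x − y)² dx dy ≤ C · log(1 + R(𝒯)) · Σ_{i=1}^{r} (sup_{x ∈ e_i} |v(x)|)², where R(𝒯) is the ratio of the largest to the smallest element length of 𝒯. -/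
open MeasureTheory Set

/-!
Split the double integral over all pairs of mesh elements `(E i, E j)`, and let `M i` be the
supremum of `|v|` on `E i`. On equal or adjacent elements the inverse inequality for polynomials,
`|v'| ≤ c * M i / h i`, bounds the contribution by a multiple of `M i ^ 2 + M j ^ 2`, whatever the
lengths `h i` and `h j` are. On separated elements
`(v s - v t) ^ 2 ≤ 2 * (M i ^ 2 + M j ^ 2)`, and for fixed `i` the masses of the kernel
`1 / (s - t) ^ 2` on `E i ×ˢ E j` add up over all `j ≥ i + 2` to at most
`log (1 + h i / h (i + 1))`, and similarly on the left. The rows of the resulting symmetric weight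
thus sum to `O(log (1 + R))`, and so the double sum is controlled by the sum of the `M i ^ 2`.
-/

open scoped ENNReal NNReal

lemma le_sup'_div_inf'_mul {ι : Type*} {s : Finset ι} (hs : s.Nonempty) {f : ι → ℝ}
    (hf : ∀ i ∈ s, 0 < f i) {i j : ι} (hi : i ∈ s) (hj : j ∈ s) :
    f i ≤ s.sup' hs f / s.inf' hs f * f j := by
  have hinf : 0 < s.inf' hs f := (Finset.lt_inf'_iff hs).2 hf
  rw [div_mul_eq_mul_div, le_div_iff₀ hinf]
  exact mul_le_mul (s.le_sup' f hi) (s.inf'_le f hj) hinf.le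
    ((hf i hi).le.trans (s.le_sup' f hi))

lemma one_le_sup'_div_inf' {ι : Type*} {s : Finset ι} (hs : s.Nonempty) {f : ι → ℝ}
    (hf : ∀ i ∈ s, 0 < f i) : 1 ≤ s.sup' hs f / s.inf' hs f := by
  obtain ⟨i, hi⟩ := hs
  exact le_of_mul_le_mul_right (by simpa using le_sup'_div_inf'_mul ⟨i, hi⟩ hf hi hi) (hf i hi)

lemma ennreal_add_sq_le (a b : ℝ≥0∞) : (a + b) ^ 2 ≤ 2 * (a ^ 2 + b ^ 2) := by
  have h := ENNReal.rpow_add_le_mul_rpow_add_rpow a b one_le_two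
  rw [show (2 - 1 : ℝ) = 1 by norm_num, ENNReal.rpow_one] at h
  simpa only [ENNReal.rpow_two] using h

lemma sum_sum_add_mul_le_of_symm {ι R : Type*} [CommSemiring R] [PartialOrder R]
    [CanonicallyOrderedAdd R] [IsOrderedRing R] {s : Finset ι} {w : ι → ι → R} {m : ι → R} {D : R}
    (hw : ∀ i j, w i j = w j i) (hD : ∀ i ∈ s, ∑ j ∈ s, w i j ≤ D) :
    ∑ i ∈ s, ∑ j ∈ s, (m i + m j) * w i j ≤ 2 * D * ∑ i ∈ s, m i := by
  have hsymm : ∑ i ∈ s, ∑ j ∈ s, m j * w i j = ∑ i ∈ s, ∑ j ∈ s, m i * w i j := by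
    rw [Finset.sum_comm]
    simp only [hw]
  calc ∑ i ∈ s, ∑ j ∈ s, (m i + m j) * w i j = 2 * ∑ i ∈ s, m i * ∑ j ∈ s, w i j := by
        simp only [add_mul, Finset.sum_add_distrib, hsymm, Finset.mul_sum, two_mul]
    _ ≤ 2 * ∑ i ∈ s, m i * D := by
        gcongr with i hi
        exact hD i hi
    _ = 2 * D * ∑ i ∈ s, m i := by
        rw [← Finset.sum_mul]
        ring

lemma sum_range_ite_near_le {R : Type*} [CommSemiring R] [PartialOrder R]
    [CanonicallyOrderedAdd R] [IsOrderedRing R] (r i : ℕ) (a : R) (f : ℕ → R) :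
    ∑ j ∈ Finset.range r, (if i ≤ j + 1 ∧ j ≤ i + 1 then a else f j) ≤
      3 * a + (∑ j ∈ Finset.range (i - 1), f j + ∑ j ∈ Finset.Ico (i + 2) r, f j) := by
  rw [Finset.sum_ite, Finset.sum_const, nsmul_eq_mul]
  gcongr
  · have hnear : {j ∈ Finset.range r | i ≤ j + 1 ∧ j ≤ i + 1} ⊆ Finset.Icc (i - 1) (i + 1) :=
      fun j hj => by grind
    have hcard := (Finset.card_le_card hnear).trans (by simp; omega : _ ≤ 3)
    exact_mod_cast Nat.mono_cast (α := R) hcard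
  · rw [← Finset.sum_union (Finset.disjoint_left.2 fun j hj => by grind)]
    exact Finset.sum_le_sum_of_subset fun j hj => by grind

lemma lintegral_biUnion_finset_le {α ι : Type*} [MeasurableSpace α] {μ : Measure α}
    (s : Finset ι) (t : ι → Set α) (f : α → ℝ≥0∞) :
    ∫⁻ x in ⋃ i ∈ s, t i, f x ∂μ ≤ ∑ i ∈ s, ∫⁻ x in t i, f x ∂μ := by
  classical
  induction s using Finset.induction_on with
  | empty => simp
  | insert i s hi ih =>
    rw [Finset.set_biUnion_insert, Finset.sum_insert hi]
    exact (lintegral_union_le _ _ _).trans (add_le_add_right ih _)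

lemma measurePreserving_withDensity_of_comp_eq {α : Type*} [MeasurableSpace α] {μ : Measure α}
    {f : α → ℝ≥0∞} {g : α → α} (hg : MeasurePreserving g μ μ) (hge : MeasurableEmbedding g)
    (hfg : ∀ x, f (g x) = f x) :
    MeasurePreserving g (μ.withDensity f) (μ.withDensity f) := by
  refine ⟨hg.measurable, Measure.ext fun s hs => ?_⟩
  rw [Measure.map_apply hg.measurable hs, withDensity_apply _ (hg.measurable hs),
    withDensity_apply _ hs, ← hg.setLIntegral_comp_preimage_emb hge f s]
  simp only [hfg]

lemma lintegral_Ici_inv_sq_le (d : ℝ) :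
    ∫⁻ x in Ici d, ENNReal.ofReal (x ^ 2)⁻¹ ≤ (ENNReal.ofReal d)⁻¹ := by
  rcases le_or_gt d 0 with hd | hd
  · simp [ENNReal.ofReal_of_nonpos hd]
  have hrpow : EqOn (fun x : ℝ => ENNReal.ofReal (x ^ 2)⁻¹)
      (fun x => ENNReal.ofReal (x ^ (-2 : ℝ))) (Ioi d) := fun x hx => by
    simp only [Real.rpow_neg (hd.trans hx).le, Real.rpow_two]
  rw [← restrict_Ioi_eq_restrict_Ici, setLIntegral_congr_fun measurableSet_Ioi hrpow,
    ← ofReal_integral_eq_lintegral_ofReal (integrableOn_Ioi_rpow_of_lt (by norm_num) hd)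
      (ae_restrict_of_forall_mem measurableSet_Ioi fun x hx => Real.rpow_nonneg (hd.trans hx).le _),
    integral_Ioi_rpow_of_lt (by norm_num) hd, ← ENNReal.ofReal_inv_of_pos hd]
  norm_num [Real.rpow_neg_one]

lemma lintegral_Ici_inv_sub_sq_le (s z : ℝ) :
    ∫⁻ t in Ici z, ENNReal.ofReal ((s - t) ^ 2)⁻¹ ≤ (ENNReal.ofReal (z - s))⁻¹ := by
  have h := (measurePreserving_sub_right volume s).setLIntegral_comp_preimage_emb
    (MeasurableEquiv.subRight s).measurableEmbedding
    (fun x => ENNReal.ofReal (x ^ 2)⁻¹) (Ici (z - s))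
  simpa [← h, sub_sq_comm s] using lintegral_Ici_inv_sq_le (z - s)

lemma lintegral_Icc_inv {a b : ℝ} (ha : 0 < a) (hab : a ≤ b) :
    ∫⁻ x in Icc a b, (ENNReal.ofReal x)⁻¹ = ENNReal.ofReal (Real.log (b / a)) := by
  have hinv : EqOn (fun x : ℝ => (ENNReal.ofReal x)⁻¹) (fun x => ENNReal.ofReal x⁻¹) (Icc a b) :=
    fun x hx => (ENNReal.ofReal_inv_of_pos (ha.trans_le hx.1)).symm
  have hint : IntegrableOn (fun x : ℝ => x⁻¹) (Icc a b) :=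
    (continuousOn_id.inv₀ fun x hx => (ha.trans_le hx.1).ne').integrableOn_Icc
  rw [setLIntegral_congr_fun measurableSet_Icc hinv, ← ofReal_integral_eq_lintegral_ofReal hint
      (ae_restrict_of_forall_mem measurableSet_Icc fun x hx => inv_nonneg.2 (ha.le.trans hx.1)),
    integral_Icc_eq_integral_Ioc, ← intervalIntegral.integral_of_le hab,
    integral_inv_of_pos ha (ha.trans_le hab)]

lemma lintegral_Icc_inv_sub {x y z : ℝ} (hxy : x ≤ y) (hyz : y < z) :
    ∫⁻ s in Icc x y, (ENNReal.ofReal (z - s))⁻¹ =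
      ENNReal.ofReal (Real.log ((z - x) / (z - y))) := by
  rw [← lintegral_Icc_inv (sub_pos.2 hyz) (by linarith),
    ← (Measure.measurePreserving_sub_left volume z).setLIntegral_comp_preimage_emb
      (MeasurableEquiv.subLeft z).measurableEmbedding (fun x => (ENNReal.ofReal x)⁻¹)]
  simp

lemma sum_measure_prod_le_of_pairwiseDisjoint {ι α β : Type*} [MeasurableSpace α]
    [MeasurableSpace β] {μ : Measure (α × β)} {J : Finset ι} {A : Set α} {B : Set β} {E : ι → Set β}
    (hA : MeasurableSet A) (hE : ∀ j ∈ J, MeasurableSet (E j)) (hd : (J : Set ι).PairwiseDisjoint E)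
    (hB : ∀ j ∈ J, E j ⊆ B) :
    ∑ j ∈ J, μ (A ×ˢ E j) ≤ μ (A ×ˢ B) := by
  rw [← measure_biUnion_finset (fun i hi j hj hij => (hd hi hj hij).set_prod_right A A)
    fun j hj => hA.prod (hE j hj)]
  exact measure_mono (iUnion₂_subset fun j hj => prod_mono_right (hB j hj))

/-! ### The Gagliardo kernel -/

/-- The measure `ds dt / (s - t)²` on the plane, against which the squared `H^{1/2}` Gagliardo
seminorm integrates squared distances. Since `0⁻¹ = 0` in `ℝ`, its density is `0` (rather than
`∞`) on the diagonal, which is a null set anyway. -/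
noncomputable def gagliardoMeasure : Measure (ℝ × ℝ) :=
  volume.withDensity fun p => ENNReal.ofReal ((p.1 - p.2) ^ 2)⁻¹

/-- The part of the squared `H^{1/2}` Gagliardo seminorm of `u` that comes from the pairs of points
in `S`. It is valued in `ℝ≥0∞`, so that a bound on it includes finiteness. -/
noncomputable def gagliardoEnergy {Y : Type*} [PseudoEMetricSpace Y] (u : ℝ → Y)
    (S : Set (ℝ × ℝ)) : ℝ≥0∞ :=
  ∫⁻ p in S, edist (u p.1) (u p.2) ^ 2 ∂gagliardoMeasure

lemma setLIntegral_gagliardoMeasure {S : Set (ℝ × ℝ)} (hS : MeasurableSet S)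
    (f : ℝ × ℝ → ℝ≥0∞) :
    ∫⁻ p in S, f p ∂gagliardoMeasure =
      ∫⁻ p in S, ENNReal.ofReal ((p.1 - p.2) ^ 2)⁻¹ * f p :=
  setLIntegral_withDensity_eq_setLIntegral_mul_non_measurable _ (by fun_prop) f hS
    (ae_of_all _ fun _ => ENNReal.ofReal_lt_top)

lemma measurePreserving_swap_gagliardoMeasure :
    MeasurePreserving Prod.swap gagliardoMeasure gagliardoMeasure :=
  measurePreserving_withDensity_of_comp_eq Measure.measurePreserving_swap
    MeasurableEquiv.prodComm.measurableEmbedding fun p => by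
      rw [Prod.fst_swap, Prod.snd_swap, sub_sq_comm]

lemma setLIntegral_swap_gagliardoMeasure (A B : Set ℝ) (f : ℝ × ℝ → ℝ≥0∞) :
    ∫⁻ p in A ×ˢ B, f p.swap ∂gagliardoMeasure = ∫⁻ p in B ×ˢ A, f p ∂gagliardoMeasure := by
  rw [← preimage_swap_prod]
  exact measurePreserving_swap_gagliardoMeasure.setLIntegral_comp_preimage_emb
    MeasurableEquiv.prodComm.measurableEmbedding f _

lemma gagliardoMeasure_prod_comm (A B : Set ℝ) :
    gagliardoMeasure (A ×ˢ B) = gagliardoMeasure (B ×ˢ A) := by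
  simpa using setLIntegral_swap_gagliardoMeasure A B 1

instance : gagliardoMeasure.IsNegInvariant :=
  ⟨(measurePreserving_withDensity_of_comp_eq (Measure.measurePreserving_neg volume)
    (MeasurableEquiv.neg _).measurableEmbedding fun p => by
      rw [Prod.fst_neg, Prod.snd_neg, neg_sub_neg, sub_sq_comm]).map_eq⟩

lemma setLIntegral_prod_fst_gagliardoMeasure_le {A B : Set ℝ} (hA : MeasurableSet A)
    (hB : MeasurableSet B) (f : ℝ → ℝ≥0∞) :
    ∫⁻ p in A ×ˢ B, f p.1 ∂gagliardoMeasure ≤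
      ∫⁻ s in A, f s * ∫⁻ t in B, ENNReal.ofReal ((s - t) ^ 2)⁻¹ := by
  rw [setLIntegral_gagliardoMeasure (hA.prod hB), Measure.volume_eq_prod, ← Measure.prod_restrict]
  refine (lintegral_prod_le _).trans (lintegral_mono fun s => ?_)
  dsimp only
  rw [lintegral_mul_const _ (by fun_prop), mul_comm]

lemma setLIntegral_prod_Ici_gagliardoMeasure_le {A : Set ℝ} (hA : MeasurableSet A) (z : ℝ)
    (f : ℝ → ℝ≥0∞) :
    ∫⁻ p in A ×ˢ Ici z, f p.1 ∂gagliardoMeasure ≤ ∫⁻ s in A, f s * (ENNReal.ofReal (z - s))⁻¹ := by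
  refine (setLIntegral_prod_fst_gagliardoMeasure_le hA measurableSet_Ici f).trans ?_
  gcongr with s
  exact lintegral_Ici_inv_sub_sq_le s z

lemma gagliardoMeasure_Icc_prod_Ici_le {x y z R : ℝ} (hxy : x ≤ y) (hyz : y < z)
    (hR : y - x ≤ R * (z - y)) :
    gagliardoMeasure (Icc x y ×ˢ Ici z) ≤ ENNReal.ofReal (Real.log (1 + R)) := by
  have hzy := sub_pos.2 hyz
  calc gagliardoMeasure (Icc x y ×ˢ Ici z) ≤ ∫⁻ s in Icc x y, (ENNReal.ofReal (z - s))⁻¹ := by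
        simpa using setLIntegral_prod_Ici_gagliardoMeasure_le measurableSet_Icc z fun _ => 1
    _ = ENNReal.ofReal (Real.log ((z - x) / (z - y))) := lintegral_Icc_inv_sub hxy hyz
    _ ≤ ENNReal.ofReal (Real.log (1 + R)) := by
        gcongr
        · exact div_pos (by linarith) hzy
        · rw [div_le_iff₀ hzy]
          linarith

lemma gagliardoMeasure_Icc_prod_Iic_le {x y z R : ℝ} (hxy : x ≤ y) (hzx : z < x)
    (hR : y - x ≤ R * (x - z)) :
    gagliardoMeasure (Icc x y ×ˢ Iic z) ≤ ENNReal.ofReal (Real.log (1 + R)) := by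
  have hneg : Icc x y ×ˢ Iic z = -(Icc (-y) (-x) ×ˢ Ici (-z)) := by ext; simp
  rw [hneg, Measure.measure_neg]
  exact gagliardoMeasure_Icc_prod_Ici_le (neg_le_neg hxy) (neg_lt_neg hzx) (by linarith)

section Energy

variable {Y : Type*} [PseudoEMetricSpace Y] {u : ℝ → Y}

lemma gagliardoEnergy_mono {S T : Set (ℝ × ℝ)} (h : S ⊆ T) :
    gagliardoEnergy u S ≤ gagliardoEnergy u T :=
  lintegral_mono_set h

lemma gagliardoEnergy_prod_comm (u : ℝ → Y) (A B : Set ℝ) :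
    gagliardoEnergy u (A ×ˢ B) = gagliardoEnergy u (B ×ˢ A) := by
  simpa only [gagliardoEnergy, Prod.fst_swap, Prod.snd_swap, edist_comm] using
    (setLIntegral_swap_gagliardoMeasure A B fun p => edist (u p.2) (u p.1) ^ 2)

lemma gagliardoEnergy_Icc_prod_self_le {L : ℝ≥0} {x y : ℝ}
    (hu : LipschitzOnWith L u (Icc x y)) :
    gagliardoEnergy u (Icc x y ×ˢ Icc x y) ≤ (L * ENNReal.ofReal (y - x)) ^ 2 := by
  have hS : MeasurableSet (Icc x y ×ˢ Icc x y) := measurableSet_Icc.prod measurableSet_Icc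
  have hbound : ∀ p ∈ Icc x y ×ˢ Icc x y,
      ENNReal.ofReal ((p.1 - p.2) ^ 2)⁻¹ * edist (u p.1) (u p.2) ^ 2 ≤ (L : ℝ≥0∞) ^ 2 := by
    intro p hp
    have hp' : ENNReal.ofReal ((p.1 - p.2) ^ 2)⁻¹ * edist p.1 p.2 ^ 2 ≤ 1 := by
      rw [edist_dist, Real.dist_eq, ← ENNReal.ofReal_pow (abs_nonneg _), sq_abs,
        ← ENNReal.ofReal_mul (by positivity)]
      exact ENNReal.ofReal_le_one.2 inv_mul_le_one
    calc ENNReal.ofReal ((p.1 - p.2) ^ 2)⁻¹ * edist (u p.1) (u p.2) ^ 2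
        ≤ ENNReal.ofReal ((p.1 - p.2) ^ 2)⁻¹ * (L * edist p.1 p.2) ^ 2 := by
          gcongr
          exact hu hp.1 hp.2
      _ = L ^ 2 * (ENNReal.ofReal ((p.1 - p.2) ^ 2)⁻¹ * edist p.1 p.2 ^ 2) := by ring
      _ ≤ L ^ 2 := mul_le_of_le_one_right' hp'
  calc gagliardoEnergy u (Icc x y ×ˢ Icc x y)
      ≤ ∫⁻ _ in Icc x y ×ˢ Icc x y, (L : ℝ≥0∞) ^ 2 := by
        rw [gagliardoEnergy, setLIntegral_gagliardoMeasure hS]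
        exact setLIntegral_mono' hS hbound
    _ = (L * ENNReal.ofReal (y - x)) ^ 2 := by
        rw [setLIntegral_const, Measure.volume_eq_prod, Measure.prod_prod, Real.volume_Icc]
        ring

lemma setLIntegral_edist_sq_Icc_prod_Ici_le {L : ℝ≥0} {x z : ℝ} (hxz : x ≤ z)
    (hu : LipschitzOnWith L u (Icc x z)) :
    ∫⁻ p in Icc x z ×ˢ Ici z, edist (u p.1) (u z) ^ 2 ∂gagliardoMeasure ≤
      (L * ENNReal.ofReal (z - x)) ^ 2 := by
  have hbound : ∀ s ∈ Icc x z, edist (u s) (u z) ^ 2 * (ENNReal.ofReal (z - s))⁻¹ ≤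
      (L : ℝ≥0∞) ^ 2 * ENNReal.ofReal (z - x) := by
    intro s hs
    have hdist : edist (u s) (u z) ≤ L * ENNReal.ofReal (z - s) := by
      have := hu hs (right_mem_Icc.2 hxz)
      rwa [edist_comm s, edist_dist, Real.dist_eq, abs_of_nonneg (sub_nonneg.2 hs.2)] at this
    calc edist (u s) (u z) ^ 2 * (ENNReal.ofReal (z - s))⁻¹
        ≤ (L * ENNReal.ofReal (z - s)) ^ 2 * (ENNReal.ofReal (z - s))⁻¹ := by gcongr
      _ = L ^ 2 * ENNReal.ofReal (z - s) *
          (ENNReal.ofReal (z - s) * (ENNReal.ofReal (z - s))⁻¹) := by ring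
      _ ≤ L ^ 2 * ENNReal.ofReal (z - s) := mul_le_of_le_one_right' (ENNReal.mul_inv_le_one _)
      _ ≤ L ^ 2 * ENNReal.ofReal (z - x) := by
          gcongr
          exact hs.1
  calc ∫⁻ p in Icc x z ×ˢ Ici z, edist (u p.1) (u z) ^ 2 ∂gagliardoMeasure
      ≤ ∫⁻ s in Icc x z, edist (u s) (u z) ^ 2 * (ENNReal.ofReal (z - s))⁻¹ :=
        setLIntegral_prod_Ici_gagliardoMeasure_le measurableSet_Icc z fun s => edist (u s) (u z) ^ 2
    _ ≤ ∫⁻ _ in Icc x z, (L : ℝ≥0∞) ^ 2 * ENNReal.ofReal (z - x) :=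
        setLIntegral_mono' measurableSet_Icc hbound
    _ = (L * ENNReal.ofReal (z - x)) ^ 2 := by
        rw [setLIntegral_const, Real.volume_Icc]
        ring

lemma setLIntegral_edist_sq_Icc_prod_Iic_le {L : ℝ≥0} {y z : ℝ} (hzy : z ≤ y)
    (hu : LipschitzOnWith L u (Icc z y)) :
    ∫⁻ p in Icc z y ×ˢ Iic z, edist (u p.1) (u z) ^ 2 ∂gagliardoMeasure ≤
      (L * ENNReal.ofReal (y - z)) ^ 2 := by
  have hneg : Neg.neg ⁻¹' (Icc z y ×ˢ Iic z) = Icc (-y) (-z) ×ˢ Ici (-z) := by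
    ext; simp
  have hu' : LipschitzOnWith L (fun s => u (-s)) (Icc (-y) (-z)) := by
    have hmaps : MapsTo (Neg.neg : ℝ → ℝ) (Icc (-y) (-z)) (Icc z y) := fun s hs =>
      ⟨le_neg_of_le_neg hs.2, neg_le_of_neg_le hs.1⟩
    rw [← mul_one L]
    exact hu.comp LipschitzWith.id.neg.lipschitzOnWith hmaps
  have h := setLIntegral_edist_sq_Icc_prod_Ici_le (neg_le_neg hzy) hu'
  rw [← (Measure.measurePreserving_neg gagliardoMeasure).setLIntegral_comp_preimage_emb
    (MeasurableEquiv.neg _).measurableEmbedding, hneg]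
  simpa only [Prod.fst_neg, neg_neg, neg_sub_neg] using h

lemma gagliardoEnergy_Icc_prod_Icc_le {L L' : ℝ≥0} {x y z : ℝ} (hxz : x ≤ z) (hzy : z ≤ y)
    (hu : LipschitzOnWith L u (Icc x z)) (hu' : LipschitzOnWith L' u (Icc z y)) :
    gagliardoEnergy u (Icc x z ×ˢ Icc z y) ≤
      2 * ((L * ENNReal.ofReal (z - x)) ^ 2 + (L' * ENNReal.ofReal (y - z)) ^ 2) := by
  have hleft : ∫⁻ p in Icc x z ×ˢ Icc z y, edist (u p.1) (u z) ^ 2 ∂gagliardoMeasure ≤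
      (L * ENNReal.ofReal (z - x)) ^ 2 :=
    (lintegral_mono_set (prod_mono_right Icc_subset_Ici_self)).trans
      (setLIntegral_edist_sq_Icc_prod_Ici_le hxz hu)
  have hright : ∫⁻ p in Icc x z ×ˢ Icc z y, edist (u p.2) (u z) ^ 2 ∂gagliardoMeasure ≤
      (L' * ENNReal.ofReal (y - z)) ^ 2 := by
    rw [← setLIntegral_swap_gagliardoMeasure]
    exact (lintegral_mono_set (prod_mono_right Icc_subset_Iic_self)).trans
      (setLIntegral_edist_sq_Icc_prod_Iic_le hzy hu')
  have hmeas : AEMeasurable (fun p : ℝ × ℝ => edist (u p.1) (u z) ^ 2)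
      (gagliardoMeasure.restrict (Icc x z ×ˢ Icc z y)) := by
    have hcont : ContinuousOn (fun p : ℝ × ℝ => u p.1) (Icc x z ×ˢ Icc z y) :=
      hu.continuousOn.comp continuousOn_fst fun p hp => hp.1
    have hedist : Continuous fun y : Y => edist y (u z) ^ 2 :=
      (ENNReal.continuous_pow 2).comp (continuous_id.edist continuous_const)
    exact (hedist.comp_continuousOn hcont).aemeasurable (measurableSet_Icc.prod measurableSet_Icc)
  calc gagliardoEnergy u (Icc x z ×ˢ Icc z y)
      ≤ ∫⁻ p in Icc x z ×ˢ Icc z y, 2 * (edist (u p.1) (u z) ^ 2 + edist (u p.2) (u z) ^ 2)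
          ∂gagliardoMeasure := by
        refine lintegral_mono fun p => ?_
        grw [edist_triangle_right (u p.1) (u p.2) (u z), ennreal_add_sq_le]
    _ = 2 * (∫⁻ p in Icc x z ×ˢ Icc z y, edist (u p.1) (u z) ^ 2 ∂gagliardoMeasure +
          ∫⁻ p in Icc x z ×ˢ Icc z y, edist (u p.2) (u z) ^ 2 ∂gagliardoMeasure) := by
        rw [lintegral_const_mul' _ _ ENNReal.ofNat_ne_top, lintegral_add_left' hmeas]
    _ ≤ 2 * ((L * ENNReal.ofReal (z - x)) ^ 2 + (L' * ENNReal.ofReal (y - z)) ^ 2) := by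
        gcongr

lemma gagliardoEnergy_prod_le {A B : Set ℝ} (hA : MeasurableSet A) (hB : MeasurableSet B) {y₀ : Y}
    {M N : ℝ≥0∞} (hM : ∀ s ∈ A, edist (u s) y₀ ≤ M) (hN : ∀ t ∈ B, edist (u t) y₀ ≤ N) :
    gagliardoEnergy u (A ×ˢ B) ≤ (M ^ 2 + N ^ 2) * (2 * gagliardoMeasure (A ×ˢ B)) := by
  calc gagliardoEnergy u (A ×ˢ B) ≤ ∫⁻ _ in A ×ˢ B, 2 * (M ^ 2 + N ^ 2) ∂gagliardoMeasure := by
        refine setLIntegral_mono' (hA.prod hB) fun p hp => ?_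
        grw [edist_triangle_right (u p.1) (u p.2) y₀, ennreal_add_sq_le, hM _ hp.1,
          hN _ hp.2]
    _ = (M ^ 2 + N ^ 2) * (2 * gagliardoMeasure (A ×ˢ B)) := by
        rw [setLIntegral_const]
        ring

end Energy

/-! ### Summation over a graded mesh -/

/-- The `i`-th element of the mesh with nodes `ξ`, taken half-open so that the elements partition
`Ioc (ξ 0) (ξ r)`. -/
def meshElement (ξ : ℕ → ℝ) (i : ℕ) : Set ℝ :=
  Ioc (ξ i) (ξ (i + 1))

/-- The nodes `ξ 0 < ⋯ < ξ r` form a mesh in which the lengths of two neighbouring elements differ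
by a factor of at most `R`. -/
structure IsGradedMesh (ξ : ℕ → ℝ) (r : ℕ) (R : ℝ) : Prop where
  strictMonoOn : StrictMonoOn ξ (Iic r)
  length_le_mul_succ {i : ℕ} : i + 1 < r → ξ (i + 1) - ξ i ≤ R * (ξ (i + 2) - ξ (i + 1))
  succ_length_le_mul {i : ℕ} : i + 1 < r → ξ (i + 2) - ξ (i + 1) ≤ R * (ξ (i + 1) - ξ i)

lemma measurableSet_meshElement (ξ : ℕ → ℝ) (i : ℕ) : MeasurableSet (meshElement ξ i) :=
  measurableSet_Ioc

lemma meshElement_subset_Icc (ξ : ℕ → ℝ) (i : ℕ) : meshElement ξ i ⊆ Icc (ξ i) (ξ (i + 1)) :=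
  Ioc_subset_Icc_self

lemma pairwiseDisjoint_meshElement {ξ : ℕ → ℝ} {r : ℕ} (hξ : MonotoneOn ξ (Iic r)) :
    (Iio r).PairwiseDisjoint (meshElement ξ) := by
  have hlt : ∀ i j, i < j → j < r → Disjoint (meshElement ξ i) (meshElement ξ j) :=
    fun i j hij hj =>
      Ioc_disjoint_Ioc_of_le (hξ (mem_Iic.2 (by omega)) (mem_Iic.2 (by omega)) hij)
  intro i hi j hj hij
  rcases hij.lt_or_gt with h | h
  exacts [hlt i j h hj, (hlt j i h hi).symm]

namespace IsGradedMesh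

variable {ξ : ℕ → ℝ} {r : ℕ} {R : ℝ}

lemma node_lt (hξ : IsGradedMesh ξ r R) {i : ℕ} (hi : i < r) : ξ i < ξ (i + 1) :=
  hξ.strictMonoOn (mem_Iic.2 hi.le) (mem_Iic.2 hi) i.lt_succ_self

lemma node_le (hξ : IsGradedMesh ξ r R) {i j : ℕ} (hij : i ≤ j) (hj : j ≤ r) : ξ i ≤ ξ j :=
  hξ.strictMonoOn.monotoneOn (mem_Iic.2 (hij.trans hj)) (mem_Iic.2 hj) hij

lemma sum_gagliardoMeasure_meshElement_le (hξ : IsGradedMesh ξ r R) (i : ℕ) {J : Finset ℕ}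
    (hJ : ∀ j ∈ J, j < r) {B : Set ℝ} (hB : ∀ j ∈ J, meshElement ξ j ⊆ B) :
    ∑ j ∈ J, gagliardoMeasure (meshElement ξ i ×ˢ meshElement ξ j) ≤
      gagliardoMeasure (Icc (ξ i) (ξ (i + 1)) ×ˢ B) :=
  (sum_measure_prod_le_of_pairwiseDisjoint (measurableSet_meshElement ξ i)
    (fun j _ => measurableSet_meshElement ξ j)
    ((pairwiseDisjoint_meshElement hξ.strictMonoOn.monotoneOn).subset hJ) hB).trans
    (measure_mono (prod_mono_left (meshElement_subset_Icc ξ i)))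

lemma sum_Ico_gagliardoMeasure_meshElement_le (hξ : IsGradedMesh ξ r R) (i : ℕ) :
    ∑ j ∈ Finset.Ico (i + 2) r, gagliardoMeasure (meshElement ξ i ×ˢ meshElement ξ j) ≤
      ENNReal.ofReal (Real.log (1 + R)) := by
  rcases le_or_gt r (i + 1) with hr | hi
  · simp [Finset.Ico_eq_empty_of_le (hr.trans (Nat.le_succ _))]
  refine (hξ.sum_gagliardoMeasure_meshElement_le i (by simp) fun j hj => ?_).trans
    (gagliardoMeasure_Icc_prod_Ici_le (hξ.node_le i.le_succ hi.le) (hξ.node_lt hi)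
      (hξ.length_le_mul_succ hi))
  obtain ⟨hij, hjr⟩ := Finset.mem_Ico.1 hj
  exact fun t ht => (hξ.node_le hij hjr.le).trans ht.1.le

lemma sum_range_gagliardoMeasure_meshElement_le (hξ : IsGradedMesh ξ r R) {i : ℕ} (hi : i < r) :
    ∑ j ∈ Finset.range (i - 1), gagliardoMeasure (meshElement ξ i ×ˢ meshElement ξ j) ≤
      ENNReal.ofReal (Real.log (1 + R)) := by
  rcases i with _ | n
  · simp
  have hn : n < r := n.lt_succ_self.trans hi
  refine (hξ.sum_gagliardoMeasure_meshElement_le (n + 1) (by grind) fun j hj => ?_).trans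
    (gagliardoMeasure_Icc_prod_Iic_le (hξ.node_le (Nat.le_succ _) hi) (hξ.node_lt hn)
      (hξ.succ_length_le_mul hi))
  exact fun t ht => ht.2.trans (hξ.node_le (Finset.mem_range.1 hj) hn.le)

end IsGradedMesh

lemma isGradedMesh_sup'_div_inf' {ξ : ℕ → ℝ} {r : ℕ} (hr : (Finset.range r).Nonempty)
    (hξ : ∀ i < r, ξ i < ξ (i + 1)) :
    IsGradedMesh ξ r ((Finset.range r).sup' hr (fun i => ξ (i + 1) - ξ i) /
      (Finset.range r).inf' hr fun i => ξ (i + 1) - ξ i) := by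
  have hpos : ∀ i ∈ Finset.range r, 0 < ξ (i + 1) - ξ i := fun i hi =>
    sub_pos.2 (hξ i (Finset.mem_range.1 hi))
  have hmem {i : ℕ} (hi : i + 1 < r) : i ∈ Finset.range r ∧ i + 1 ∈ Finset.range r := by grind
  exact {
    strictMonoOn := strictMonoOn_Iic_of_lt_succ hξ
    length_le_mul_succ := fun hi => le_sup'_div_inf'_mul hr hpos (hmem hi).1 (hmem hi).2
    succ_length_le_mul := fun hi => le_sup'_div_inf'_mul hr hpos (hmem hi).2 (hmem hi).1 }

/-- The bound obtained for the energy of `meshElement ξ i ×ˢ meshElement ξ j` per unit of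
`M i ^ 2 + M j ^ 2`: the inverse inequality with constant `c` for equal or adjacent elements, the
kernel mass for separated ones. -/
noncomputable def pairWeight (ξ : ℕ → ℝ) (c : ℝ≥0∞) (i j : ℕ) : ℝ≥0∞ :=
  if i ≤ j + 1 ∧ j ≤ i + 1 then 2 * c ^ 2
  else 2 * gagliardoMeasure (meshElement ξ i ×ˢ meshElement ξ j)

lemma pairWeight_comm (ξ : ℕ → ℝ) (c : ℝ≥0∞) (i j : ℕ) :
    pairWeight ξ c i j = pairWeight ξ c j i := by
  simp only [pairWeight, gagliardoMeasure_prod_comm (meshElement ξ i), and_comm]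

lemma IsGradedMesh.sum_pairWeight_le {ξ : ℕ → ℝ} {r : ℕ} {R : ℝ} (hξ : IsGradedMesh ξ r R)
    (c : ℝ≥0∞) {i : ℕ} (hi : i < r) :
    ∑ j ∈ Finset.range r, pairWeight ξ c i j ≤
      6 * c ^ 2 + 4 * ENNReal.ofReal (Real.log (1 + R)) := by
  refine (sum_range_ite_near_le r i _ _).trans ?_
  rw [← Finset.mul_sum, ← Finset.mul_sum]
  grw [hξ.sum_Ico_gagliardoMeasure_meshElement_le i,
    hξ.sum_range_gagliardoMeasure_meshElement_le hi]
  apply le_of_eq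
  ring

section Mesh

variable {Y : Type*} [PseudoEMetricSpace Y] {u : ℝ → Y} {y₀ : Y} {ξ : ℕ → ℝ} {r : ℕ} {R : ℝ}
  {c : ℝ≥0∞} {L : ℕ → ℝ≥0} {M : ℕ → ℝ≥0∞}

lemma gagliardoEnergy_meshElement_self_le {i : ℕ}
    (hL : LipschitzOnWith (L i) u (Icc (ξ i) (ξ (i + 1))))
    (hLM : L i * ENNReal.ofReal (ξ (i + 1) - ξ i) ≤ c * M i) :
    gagliardoEnergy u (meshElement ξ i ×ˢ meshElement ξ i) ≤ c ^ 2 * M i ^ 2 := by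
  have hsub := meshElement_subset_Icc ξ i
  grw [gagliardoEnergy_mono (prod_mono hsub hsub), gagliardoEnergy_Icc_prod_self_le hL, hLM,
    mul_pow]

lemma gagliardoEnergy_meshElement_succ_le {i : ℕ} (hi : ξ i ≤ ξ (i + 1))
    (hi' : ξ (i + 1) ≤ ξ (i + 2)) (hL : LipschitzOnWith (L i) u (Icc (ξ i) (ξ (i + 1))))
    (hL' : LipschitzOnWith (L (i + 1)) u (Icc (ξ (i + 1)) (ξ (i + 2))))
    (hLM : L i * ENNReal.ofReal (ξ (i + 1) - ξ i) ≤ c * M i)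
    (hLM' : L (i + 1) * ENNReal.ofReal (ξ (i + 2) - ξ (i + 1)) ≤ c * M (i + 1)) :
    gagliardoEnergy u (meshElement ξ i ×ˢ meshElement ξ (i + 1)) ≤
      (M i ^ 2 + M (i + 1) ^ 2) * (2 * c ^ 2) := by
  grw [gagliardoEnergy_mono (prod_mono (meshElement_subset_Icc ξ i) (meshElement_subset_Icc ξ _)),
    gagliardoEnergy_Icc_prod_Icc_le hi hi' hL hL', hLM, hLM']
  apply le_of_eq
  ring

lemma gagliardoEnergy_meshElement_prod_le (hξ : MonotoneOn ξ (Iic r))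
    (hL : ∀ i < r, LipschitzOnWith (L i) u (Icc (ξ i) (ξ (i + 1))))
    (hLM : ∀ i < r, L i * ENNReal.ofReal (ξ (i + 1) - ξ i) ≤ c * M i)
    (hM : ∀ i < r, ∀ s ∈ Icc (ξ i) (ξ (i + 1)), edist (u s) y₀ ≤ M i)
    {i j : ℕ} (hi : i < r) (hj : j < r) :
    gagliardoEnergy u (meshElement ξ i ×ˢ meshElement ξ j) ≤
      (M i ^ 2 + M j ^ 2) * pairWeight ξ c i j := by
  have hnode {n : ℕ} (hn : n < r) : ξ n ≤ ξ (n + 1) :=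
    hξ (mem_Iic.2 hn.le) (mem_Iic.2 hn) n.le_succ
  have hsucc {n : ℕ} (hn : n + 1 < r) := gagliardoEnergy_meshElement_succ_le
    (hnode (n.lt_succ_self.trans hn)) (hnode hn) (hL n (n.lt_succ_self.trans hn)) (hL _ hn)
    (hLM n (n.lt_succ_self.trans hn)) (hLM _ hn)
  unfold pairWeight
  split_ifs with hnear
  · obtain rfl | rfl | rfl : j = i ∨ j = i + 1 ∨ i = j + 1 := by omega
    · calc gagliardoEnergy u (meshElement ξ j ×ˢ meshElement ξ j) ≤ c ^ 2 * M j ^ 2 :=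
            gagliardoEnergy_meshElement_self_le (hL j hj) (hLM j hj)
        _ ≤ 4 * (c ^ 2 * M j ^ 2) := le_mul_of_one_le_left' (by norm_num)
        _ = (M j ^ 2 + M j ^ 2) * (2 * c ^ 2) := by ring
    · exact hsucc hj
    · rw [gagliardoEnergy_prod_comm, add_comm (M (j + 1) ^ 2)]
      exact hsucc hi
  · exact gagliardoEnergy_prod_le (measurableSet_meshElement ξ i) (measurableSet_meshElement ξ j)
      (fun s hs => hM i hi s (meshElement_subset_Icc ξ i hs))
      (fun t ht => hM j hj t (meshElement_subset_Icc ξ j ht))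

lemma gagliardoEnergy_le_sum_meshElement (u : ℝ → Y) (ξ : ℕ → ℝ) (r : ℕ) :
    gagliardoEnergy u (Ioc (ξ 0) (ξ r) ×ˢ Ioc (ξ 0) (ξ r)) ≤ ∑ i ∈ Finset.range r,
      ∑ j ∈ Finset.range r, gagliardoEnergy u (meshElement ξ i ×ˢ meshElement ξ j) := by
  have hcover : Ioc (ξ 0) (ξ r) ×ˢ Ioc (ξ 0) (ξ r) ⊆
      ⋃ q ∈ Finset.range r ×ˢ Finset.range r, meshElement ξ q.1 ×ˢ meshElement ξ q.2 := by
    intro p hp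
    obtain ⟨i, hi, hpi⟩ := mem_iUnion₂.1 (Ioc_subset_biUnion_Ioc r ξ hp.1)
    obtain ⟨j, hj, hpj⟩ := mem_iUnion₂.1 (Ioc_subset_biUnion_Ioc r ξ hp.2)
    exact mem_iUnion₂.2 ⟨(i, j), Finset.mem_product.2 ⟨hi, hj⟩, hpi, hpj⟩
  rw [← Finset.sum_product' _ _ fun i j => gagliardoEnergy u (meshElement ξ i ×ˢ meshElement ξ j)]
  exact (gagliardoEnergy_mono hcover).trans (lintegral_biUnion_finset_le _ _ _)

theorem gagliardoEnergy_le_of_lipschitzOnWith_of_isGradedMesh (hξ : IsGradedMesh ξ r R)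
    (hL : ∀ i < r, LipschitzOnWith (L i) u (Icc (ξ i) (ξ (i + 1))))
    (hLM : ∀ i < r, L i * ENNReal.ofReal (ξ (i + 1) - ξ i) ≤ c * M i)
    (hM : ∀ i < r, ∀ s ∈ Icc (ξ i) (ξ (i + 1)), edist (u s) y₀ ≤ M i) :
    gagliardoEnergy u (Ioc (ξ 0) (ξ r) ×ˢ Ioc (ξ 0) (ξ r)) ≤
      (12 * c ^ 2 + 8 * ENNReal.ofReal (Real.log (1 + R))) * ∑ i ∈ Finset.range r, M i ^ 2 :=
  calc gagliardoEnergy u (Ioc (ξ 0) (ξ r) ×ˢ Ioc (ξ 0) (ξ r))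
      ≤ ∑ i ∈ Finset.range r, ∑ j ∈ Finset.range r,
          gagliardoEnergy u (meshElement ξ i ×ˢ meshElement ξ j) :=
        gagliardoEnergy_le_sum_meshElement u ξ r
    _ ≤ ∑ i ∈ Finset.range r, ∑ j ∈ Finset.range r, (M i ^ 2 + M j ^ 2) * pairWeight ξ c i j := by
        gcongr with i hi j hj
        exact gagliardoEnergy_meshElement_prod_le hξ.strictMonoOn.monotoneOn hL hLM hM
          (Finset.mem_range.1 hi) (Finset.mem_range.1 hj)
    _ ≤ 2 * (6 * c ^ 2 + 4 * ENNReal.ofReal (Real.log (1 + R))) * ∑ i ∈ Finset.range r, M i ^ 2 :=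
        sum_sum_add_mul_le_of_symm (pairWeight_comm ξ c) fun i hi =>
          hξ.sum_pairWeight_le c (Finset.mem_range.1 hi)
    _ = (12 * c ^ 2 + 8 * ENNReal.ofReal (Real.log (1 + R))) * ∑ i ∈ Finset.range r, M i ^ 2 := by
        ring

end Mesh

/-! ### The inverse inequality for polynomials -/

section InverseInequality

open Polynomial

lemma eval_eq_sum_eval_mul_eval_basis {ι F : Type*} [Field F] [DecidableEq ι] {s : Finset ι}
    {x : ι → F} (hx : InjOn x s) {q : F[X]} (hq : q.degree < s.card) (t : F) :
    q.eval t = ∑ i ∈ s, q.eval (x i) * (Lagrange.basis s x i).eval t := by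
  conv_lhs => rw [Lagrange.eq_interpolate hx hq]
  simp [Lagrange.interpolate_apply, eval_finsetSum]

lemma exists_lipschitzOnWith_eval_of_abs_eval_le {ι : Type*} {s : Finset ι}
    {x : ι → ℝ} (hx : InjOn x s) {K : Set ℝ} (hK : IsCompact K) (hK' : Convex ℝ K) :
    ∃ C : ℝ≥0, ∀ (q : ℝ[X]) (M : ℝ≥0), q.degree < s.card → (∀ i ∈ s, |q.eval (x i)| ≤ M) →
      LipschitzOnWith (C * M) (fun t => q.eval t) K := by
  classical
  have hbasis (i : ι) :
      ∃ D : ℝ≥0, LipschitzOnWith D (fun t => (Lagrange.basis s x i).eval t) K := by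
    have hsmooth := (Lagrange.basis s x i).contDiff_aeval (𝕜 := ℝ) 1
    simp only [coe_aeval_eq_eval] at hsmooth
    exact hsmooth.contDiffOn.exists_lipschitzOnWith one_ne_zero hK' hK
  choose D hD using hbasis
  refine ⟨∑ i ∈ s, D i, fun q M hq hM => LipschitzOnWith.of_dist_le_mul fun t ht t' ht' => ?_⟩
  rw [eval_eq_sum_eval_mul_eval_basis hx hq t, eval_eq_sum_eval_mul_eval_basis hx hq t']
  calc dist (∑ i ∈ s, q.eval (x i) * (Lagrange.basis s x i).eval t)
        (∑ i ∈ s, q.eval (x i) * (Lagrange.basis s x i).eval t')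
      ≤ ∑ i ∈ s, dist (q.eval (x i) * (Lagrange.basis s x i).eval t)
          (q.eval (x i) * (Lagrange.basis s x i).eval t') := dist_sum_sum_le _ _ _
    _ ≤ ∑ i ∈ s, M * (D i * dist t t') := by
        gcongr with i hi
        rw [Real.dist_eq, ← mul_sub, abs_mul, ← Real.dist_eq]
        exact mul_le_mul (hM i hi) ((hD i).dist_le_mul t ht t' ht') dist_nonneg M.coe_nonneg
    _ = ↑((∑ i ∈ s, D i) * M) * dist t t' := by
        push_cast
        rw [← Finset.mul_sum, ← Finset.sum_mul]
        ring

lemma natDegree_comp_C_add_C_mul_X_le {R : Type*} [CommSemiring R] (q : R[X]) (a b : R) :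
    (q.comp (C a + C b * X)).natDegree ≤ q.natDegree := by
  have h : (C a + C b * X).natDegree ≤ 1 := by compute_degree
  exact natDegree_comp_le.trans (mul_le_of_le_one_right' h)

lemma exists_lipschitzOnWith_eval_Icc_zero_one (k : ℕ) :
    ∃ C : ℝ≥0, ∀ (q : ℝ[X]) (M : ℝ≥0), q.natDegree ≤ k → (∀ t ∈ Ioo 0 1, |q.eval t| ≤ M) →
      LipschitzOnWith (C * M) (fun t => q.eval t) (Icc 0 1) := by
  have hinj : Function.Injective fun i : ℕ => ((i : ℝ) + 1) / (k + 2) := fun i j h => by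
    have hk : ((k : ℝ) + 2) ≠ 0 := by positivity
    simpa [div_left_inj' hk] using h
  obtain ⟨C, hC⟩ := exists_lipschitzOnWith_eval_of_abs_eval_le (s := Finset.range (k + 1))
    hinj.injOn isCompact_Icc (convex_Icc (0 : ℝ) 1)
  refine ⟨C, fun q M hq hM => hC q M ?_ fun i hi => hM _ ⟨by positivity, ?_⟩⟩
  · rw [Finset.card_range]
    exact degree_le_natDegree.trans_lt (by exact_mod_cast Nat.lt_succ_of_le hq)
  · have : (i : ℝ) < k + 1 := by exact_mod_cast Finset.mem_range.1 hi
    rw [div_lt_one (by positivity)]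
    linarith

theorem exists_lipschitzOnWith_eval_Icc (k : ℕ) :
    ∃ C : ℝ≥0, ∀ (q : ℝ[X]) (M : ℝ≥0) {x y : ℝ}, x < y → q.natDegree ≤ k →
      (∀ t ∈ Ioo x y, |q.eval t| ≤ M) →
      LipschitzOnWith (C * M / (y - x).toNNReal) (fun t => q.eval t) (Icc x y) := by
  obtain ⟨C, hC⟩ := exists_lipschitzOnWith_eval_Icc_zero_one k
  refine ⟨C, fun q M x y hxy hq hM => ?_⟩
  have hlen : 0 < y - x := sub_pos.2 hxy
  have hunit := hC (q.comp (Polynomial.C x + Polynomial.C (y - x) * X)) M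
    ((natDegree_comp_C_add_C_mul_X_le q x (y - x)).trans hq) fun t ht => by
      simpa using hM (x + (y - x) * t) ⟨by nlinarith [ht.1], by nlinarith [ht.2]⟩
  have hscale : LipschitzOnWith (y - x).toNNReal⁻¹ (fun t => (t - x) / (y - x)) (Icc x y) :=
    LipschitzOnWith.of_dist_le_mul fun s _ t _ => by
      rw [Real.dist_eq, Real.dist_eq, ← sub_div, sub_sub_sub_cancel_right, abs_div,
        abs_of_pos hlen, NNReal.coe_inv, Real.coe_toNNReal _ hlen.le, div_eq_inv_mul]
  have hmaps : MapsTo (fun t => (t - x) / (y - x)) (Icc x y) (Icc 0 1) := fun t ht =>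
    ⟨div_nonneg (sub_nonneg.2 ht.1) hlen.le, (div_le_one hlen).2 (by linarith [ht.2])⟩
  have hcomp := hunit.comp hscale hmaps
  rw [← div_eq_mul_inv] at hcomp
  convert hcomp using 2 with t
  simp [mul_div_cancel₀ _ hlen.ne']

lemma abs_le_sSup_image_Ioo {v : ℝ → ℝ} {x y : ℝ} (hxy : x < y) (hv : ContinuousOn v (Icc x y))
    {t : ℝ} (ht : t ∈ Icc x y) : |v t| ≤ sSup ((fun t => |v t|) '' Ioo x y) := by
  have hbdd : BddAbove ((fun t => |v t|) '' Ioo x y) :=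
    (isCompact_Icc.bddAbove_image hv.abs).mono (image_mono Ioo_subset_Icc_self)
  rw [← closure_Ioo hxy.ne] at hv ht
  exact le_on_closure (fun t ht => le_csSup hbdd (mem_image_of_mem _ ht)) hv.abs
    continuousOn_const ht

lemma eqOn_Icc_of_eqOn_Ioo {Y : Type*} [TopologicalSpace Y] [T2Space Y] {f g : ℝ → Y} {x y : ℝ}
    (hxy : x < y) (hf : ContinuousOn f (Icc x y)) (hg : ContinuousOn g (Icc x y))
    (h : EqOn f g (Ioo x y)) : EqOn f g (Icc x y) :=
  h.of_subset_closure hf hg Ioo_subset_Icc_self (closure_Ioo hxy.ne).ge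

lemma exists_lipschitzOnWith_Icc_of_eqOn_eval (k : ℕ) :
    ∃ C : ℝ≥0, ∀ {v : ℝ → ℝ} {x y : ℝ}, x < y → ContinuousOn v (Icc x y) →
      (∃ p : ℝ[X], p.natDegree ≤ k ∧ ∀ t ∈ Ioo x y, v t = p.eval t) →
      LipschitzOnWith (C * (sSup ((fun t => |v t|) '' Ioo x y)).toNNReal / (y - x).toNNReal)
        v (Icc x y) := by
  obtain ⟨C, hC⟩ := exists_lipschitzOnWith_eval_Icc k
  refine ⟨C, fun {v x y} hxy hv => ?_⟩
  rintro ⟨p, hp, heq⟩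
  have heq' : EqOn v (fun t => p.eval t) (Icc x y) :=
    eqOn_Icc_of_eqOn_Ioo hxy hv p.continuous.continuousOn heq
  have hM : ∀ t ∈ Ioo x y, |p.eval t| ≤ (sSup ((fun t => |v t|) '' Ioo x y)).toNNReal :=
    fun t ht => by
      rw [← heq t ht]
      exact (abs_le_sSup_image_Ioo hxy hv (Ioo_subset_Icc_self ht)).trans (Real.le_coe_toNNReal _)
  intro s hs t ht
  simpa only [heq' hs, heq' ht] using hC p _ hxy hp hM hs ht

end InverseInequality

/-! ### Piecewise polynomials -/

lemma ofReal_integral_le_gagliardoEnergy {v : ℝ → ℝ} {A B : Set ℝ} (hA : MeasurableSet A)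
    (hB : MeasurableSet B) (hvA : AEMeasurable v (volume.restrict A))
    (hvB : AEMeasurable v (volume.restrict B)) :
    ENNReal.ofReal (∫ s in A, ∫ t in B, (v s - v t) ^ 2 / (s - t) ^ 2) ≤
      gagliardoEnergy v (A ×ˢ B) := by
  have henorm (s t : ℝ) : ‖(v s - v t) ^ 2 / (s - t) ^ 2‖ₑ =
      ENNReal.ofReal ((s - t) ^ 2)⁻¹ * edist (v s) (v t) ^ 2 := by
    rw [Real.enorm_of_nonneg (by positivity), div_eq_inv_mul, ENNReal.ofReal_mul (by positivity),
      edist_dist, Real.dist_eq, ← ENNReal.ofReal_pow (abs_nonneg _), sq_abs]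
  have hmeas : AEMeasurable
      (fun p : ℝ × ℝ => ENNReal.ofReal ((p.1 - p.2) ^ 2)⁻¹ * edist (v p.1) (v p.2) ^ 2)
      ((volume.restrict A).prod (volume.restrict B)) :=
    (by fun_prop : Measurable fun p : ℝ × ℝ => ENNReal.ofReal ((p.1 - p.2) ^ 2)⁻¹).aemeasurable.mul
      ((hvA.comp_fst.edist hvB.comp_snd).pow_const 2)
  calc ENNReal.ofReal (∫ s in A, ∫ t in B, (v s - v t) ^ 2 / (s - t) ^ 2)
      ≤ ∫⁻ s in A, ‖∫ t in B, (v s - v t) ^ 2 / (s - t) ^ 2‖ₑ :=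
        (Real.ofReal_le_enorm _).trans (enorm_integral_le_lintegral_enorm _)
    _ ≤ ∫⁻ s in A, ∫⁻ t in B, ‖(v s - v t) ^ 2 / (s - t) ^ 2‖ₑ :=
        lintegral_mono fun s => enorm_integral_le_lintegral_enorm _
    _ = gagliardoEnergy v (A ×ˢ B) := by
        simp only [henorm]
        rw [gagliardoEnergy, setLIntegral_gagliardoMeasure (hA.prod hB), Measure.volume_eq_prod,
          ← Measure.prod_restrict, lintegral_prod _ hmeas]

lemma mul_sq_add_mul_ofReal_log_le {R : ℝ} (hR : 1 ≤ R) (c : ℝ≥0) :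
    12 * (c : ℝ≥0∞) ^ 2 + 8 * ENNReal.ofReal (Real.log (1 + R)) ≤
      ENNReal.ofReal ((12 * c ^ 2 / Real.log 2 + 8) * Real.log (1 + R)) := by
  have hlog : Real.log 2 ≤ Real.log (1 + R) := Real.log_le_log two_pos (by linarith)
  have hlog2 : 0 < Real.log 2 := Real.log_pos one_lt_two
  have hlogR := hlog2.trans_le hlog
  have hc : 12 * (c : ℝ) ^ 2 ≤ 12 * c ^ 2 / Real.log 2 * Real.log (1 + R) := by
    rw [div_mul_eq_mul_div, le_div_iff₀ hlog2]
    gcongr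
  calc 12 * (c : ℝ≥0∞) ^ 2 + 8 * ENNReal.ofReal (Real.log (1 + R))
      = ENNReal.ofReal (12 * c ^ 2 + 8 * Real.log (1 + R)) := by
        rw [ENNReal.ofReal_add (by positivity) (by positivity), ENNReal.ofReal_mul (by norm_num),
          ENNReal.ofReal_mul (by norm_num), ENNReal.ofReal_pow c.coe_nonneg,
          ENNReal.ofReal_coe_nnreal, ENNReal.ofReal_ofNat, ENNReal.ofReal_ofNat]
    _ ≤ ENNReal.ofReal ((12 * c ^ 2 / Real.log 2 + 8) * Real.log (1 + R)) := by
        rw [add_mul]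
        gcongr

theorem exists_gagliardoEnergy_le_log_mul_sum_sSup_sq (k : ℕ) :
    ∃ C : ℝ, 0 < C ∧ ∀ {ξ : ℕ → ℝ} {r : ℕ} {R : ℝ} {v : ℝ → ℝ}, IsGradedMesh ξ r R → 1 ≤ R →
      ContinuousOn v (Icc (ξ 0) (ξ r)) →
      (∀ i < r, ∃ p : Polynomial ℝ, p.natDegree ≤ k ∧ ∀ t ∈ Ioo (ξ i) (ξ (i + 1)), v t = p.eval t) →
      gagliardoEnergy v (Ioc (ξ 0) (ξ r) ×ˢ Ioc (ξ 0) (ξ r)) ≤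
        ENNReal.ofReal (C * Real.log (1 + R) *
          ∑ i ∈ Finset.range r, sSup ((fun t => |v t|) '' Ioo (ξ i) (ξ (i + 1))) ^ 2) := by
  obtain ⟨c, hc⟩ := exists_lipschitzOnWith_Icc_of_eqOn_eval k
  refine ⟨12 * c ^ 2 / Real.log 2 + 8, by positivity, fun {ξ r R v} hξ hR hv hpoly => ?_⟩
  set S : ℕ → ℝ := fun i => sSup ((fun t => |v t|) '' Ioo (ξ i) (ξ (i + 1)))
  have hvi {i : ℕ} (hi : i < r) : ContinuousOn v (Icc (ξ i) (ξ (i + 1))) :=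
    hv.mono (Icc_subset_Icc (hξ.node_le i.zero_le hi.le) (hξ.node_le hi le_rfl))
  have hS0 (i : ℕ) : 0 ≤ S i := Real.sSup_nonneg (by grind [abs_nonneg])
  have hLM : ∀ i < r, ↑(c * (S i).toNNReal / (ξ (i + 1) - ξ i).toNNReal) *
      ENNReal.ofReal (ξ (i + 1) - ξ i) ≤ c * ENNReal.ofReal (S i) := fun i hi => by
    have hlen := (Real.toNNReal_pos.2 (sub_pos.2 (hξ.node_lt hi))).ne'
    rw [ENNReal.ofReal, ← ENNReal.coe_mul, div_mul_cancel₀ _ hlen, ENNReal.coe_mul, ENNReal.ofReal]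
  have hM : ∀ i < r, ∀ t ∈ Icc (ξ i) (ξ (i + 1)), edist (v t) 0 ≤ ENNReal.ofReal (S i) :=
    fun i hi t ht => by
      rw [edist_dist, Real.dist_0_eq_abs]
      exact ENNReal.ofReal_le_ofReal (abs_le_sSup_image_Ioo (hξ.node_lt hi) (hvi hi) ht)
  calc gagliardoEnergy v (Ioc (ξ 0) (ξ r) ×ˢ Ioc (ξ 0) (ξ r))
      ≤ (12 * c ^ 2 + 8 * ENNReal.ofReal (Real.log (1 + R))) *
          ∑ i ∈ Finset.range r, ENNReal.ofReal (S i) ^ 2 :=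
        gagliardoEnergy_le_of_lipschitzOnWith_of_isGradedMesh hξ
          (fun i hi => hc (hξ.node_lt hi) (hvi hi) (hpoly i hi)) hLM hM
    _ ≤ ENNReal.ofReal ((12 * c ^ 2 / Real.log 2 + 8) * Real.log (1 + R)) *
          ∑ i ∈ Finset.range r, ENNReal.ofReal (S i) ^ 2 := by
        gcongr
        exact mul_sq_add_mul_ofReal_log_le hR c
    _ = ENNReal.ofReal ((12 * c ^ 2 / Real.log 2 + 8) * Real.log (1 + R) *
          ∑ i ∈ Finset.range r, S i ^ 2) := by
        rw [ENNReal.ofReal_mul' (Finset.sum_nonneg fun i _ => sq_nonneg _),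
          ENNReal.ofReal_sum_of_nonneg fun i _ => sq_nonneg _]
        simp only [ENNReal.ofReal_pow (hS0 _)]

theorem gagliardo_bound_log_times_local_sup_general (k : ℕ) :
    ∃ C : ℝ, 0 < C ∧ ∀ {ξ : ℕ → ℝ} {r : ℕ} {R : ℝ} {v : ℝ → ℝ}, IsGradedMesh ξ r R → 1 ≤ R →
      ContinuousOn v (Icc (ξ 0) (ξ r)) →
      (∀ i < r, ∃ p : Polynomial ℝ, p.natDegree ≤ k ∧ ∀ t ∈ Ioo (ξ i) (ξ (i + 1)), v t = p.eval t) →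
      (∫ s in Ioo (ξ 0) (ξ r), ∫ t in Ioo (ξ 0) (ξ r), (v s - v t) ^ 2 / (s - t) ^ 2) ≤
        C * Real.log (1 + R) *
          ∑ i ∈ Finset.range r, sSup ((fun t => |v t|) '' Ioo (ξ i) (ξ (i + 1))) ^ 2 := by
  obtain ⟨C, hC, hbound⟩ := exists_gagliardoEnergy_le_log_mul_sum_sSup_sq k
  refine ⟨C, hC, fun {ξ r R v} hξ hR hv hpoly => ?_⟩
  have hmeas : AEMeasurable v (volume.restrict (Ioo (ξ 0) (ξ r))) :=
    (hv.mono Ioo_subset_Icc_self).aemeasurable measurableSet_Ioo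
  have hlog : 0 ≤ Real.log (1 + R) := Real.log_nonneg (by linarith)
  rw [← ENNReal.ofReal_le_ofReal_iff (by positivity)]
  calc ENNReal.ofReal (∫ s in Ioo (ξ 0) (ξ r), ∫ t in Ioo (ξ 0) (ξ r),
          (v s - v t) ^ 2 / (s - t) ^ 2)
      ≤ gagliardoEnergy v (Ioo (ξ 0) (ξ r) ×ˢ Ioo (ξ 0) (ξ r)) :=
        ofReal_integral_le_gagliardoEnergy measurableSet_Ioo measurableSet_Ioo hmeas hmeas
    _ ≤ gagliardoEnergy v (Ioc (ξ 0) (ξ r) ×ˢ Ioc (ξ 0) (ξ r)) :=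
        gagliardoEnergy_mono (prod_mono Ioo_subset_Ioc_self Ioo_subset_Ioc_self)
    _ ≤ ENNReal.ofReal (C * Real.log (1 + R) *
          ∑ i ∈ Finset.range r, sSup ((fun t => |v t|) '' Ioo (ξ i) (ξ (i + 1))) ^ 2) :=
        hbound hξ hR hv hpoly

/-- For every `mBar ∈ ℕ`, `cBar ≥ 1`, `k ∈ ℕ` there is `C > 0` such that for
every compact interval `[a,b]`, every piecewise quasi-uniform mesh (with parameters
`(mBar, cBar)`) of `[a,b]`, and every continuous piecewise polynomial `v` of degree `≤ k`,
the squared Gagliardo `H^{1/2}` seminorm of `v` is bounded by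
`C · log(1 + R) · Σ_i (sup_{e_i} |v|)²`, where `R` is the ratio between the largest
and the smallest element length of the mesh. -/
theorem gagliardo_bound_log_times_local_sup (mBar : ℕ) (cBar : ℝ) (hc : 1 ≤ cBar) (k : ℕ) :
    ∃ C : ℝ, 0 < C ∧
      ∀ (a b : ℝ) (_hab : a < b) (r : ℕ) (hr : 0 < r) (ξ : ℕ → ℝ)
        (_h0 : ξ 0 = a) (_hr' : ξ r = b) (_hmono : ∀ i < r, ξ i < ξ (i + 1))
        -- `𝒯` is piecewise quasi-uniform with parameters `(mBar, cBar)`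
        (_hpqu : ∃ m ≤ mBar, ∃ β : ℕ → ℕ, β 0 = 0 ∧ β m = r ∧
          (∀ l < m, β l < β (l + 1)) ∧
          ∀ l < m, ∀ i, β l ≤ i → i < β (l + 1) → ∀ j, β l ≤ j → j < β (l + 1) →
            ξ (i + 1) - ξ i ≤ cBar * (ξ (j + 1) - ξ j))
        (v : ℝ → ℝ) (_hcont : ContinuousOn v (Icc a b))
        -- `v ∈ 𝕊_k(𝒯)`
        (_hpoly : ∀ i < r, ∃ p : Polynomial ℝ, p.natDegree ≤ k ∧
          ∀ t ∈ Ioo (ξ i) (ξ (i + 1)), v t = p.eval t),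
        (∫ s in Ioo a b, ∫ t in Ioo a b, (v s - v t) ^ 2 / (s - t) ^ 2) ≤
          C * Real.log (1 +
              ((Finset.range r).sup' (Finset.nonempty_range_iff.mpr hr.ne')
                  fun i => ξ (i + 1) - ξ i) /
              ((Finset.range r).inf' (Finset.nonempty_range_iff.mpr hr.ne')
                  fun i => ξ (i + 1) - ξ i)) *
            ∑ i ∈ Finset.range r,
              (sSup ((fun t => |v t|) '' Ioo (ξ i) (ξ (i + 1)))) ^ 2 := by
  obtain ⟨C, hC, hbound⟩ := gagliardo_bound_log_times_local_sup_general k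
  refine ⟨C, hC, ?_⟩
  rintro a b - r hr ξ rfl rfl hmono - v hcont hpoly
  have hr' := Finset.nonempty_range_iff.2 hr.ne'
  have hR := one_le_sup'_div_inf' hr' fun i hi => sub_pos.2 (hmono i (Finset.mem_range.1 hi))
  exact hbound (isGradedMesh_sup'_div_inf' hr' hmono) hR hcont hpoly
end

section
/- For N ∈ ℕ, N ≥ 1, let ψ_N : [0,1] → ℝ be the continuous piecewise linear function on the uniform mesh with nodes x_i = i/N (i = 0,…,N) that satisfies ψ_N(x_i) = (−1)^i for every node. Then Σ_{i=1}^{N} (sup_{x ∈ (x_{i−1}, x_i)} |ψ_N(x)|)² = N, and there exist constants c, C > 0 independent of N such that c·N ≤ ∫_0^1 ∫_0^1 (ψ_N(x) − ψ_N(y))²/(x − y)² dx dy ≤ C·N for all N ≥ 2. In particular, the estimate |v|²_{1/2} ≲ log(1 + R) Σ_e ‖v‖²_{L∞(e)} is sharp with respect to the number of mesh elements. -/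
open MeasureTheory Set

/-!
On the unit interval `ψ_N t = T (N t)`, where `T` is the triangle wave taking the value `(-1)^n` at
each integer `n`. As `T` is `2`-Lipschitz with values in `[-1, 1]`, the difference quotient of `ψ_N`
is at most both `2 N` and `2 / |s - t|`; this bounds its square by a multiple of the Cauchy density
`N² / (1 + N² (s - t)²)`, whose mass in `t` is `O(N)`. Conversely, when `t` lies in the same element
as `s`, the squared quotient is exactly `4 N²`, and an element has length `1 / N`. So the inner
integral is of order `N` for every `s`.
-/

open scoped NNReal Real

lemma isLUB_image_of_mem_closure {X α : Type*} [TopologicalSpace X] [TopologicalSpace α]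
    [LinearOrder α] [OrderTopology α] {f : X → α} {s : Set X} {x : X}
    (hx : x ∈ closure s) (hf : ContinuousWithinAt f s x) (hmax : ∀ y ∈ s, f y ≤ f x) :
    IsLUB (f '' s) (f x) :=
  isLUB_of_mem_closure (forall_mem_image.2 hmax) (hf.mem_closure_image hx)

lemma mul_mem_Icc_iff_mem_Icc_div {𝕜 : Type*} [Field 𝕜] [LinearOrder 𝕜]
    [IsStrictOrderedRing 𝕜] {a b c t : 𝕜} (hc : 0 < c) :
    c * t ∈ Icc a b ↔ t ∈ Icc (a / c) (b / c) := by
  rw [← preimage_const_mul_Icc₀ a b hc, mem_preimage]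

lemma eq_add_slope_mul_of_affine {𝕜 : Type*} [Field 𝕜] [PartialOrder 𝕜] {f : 𝕜 → 𝕜}
    {a b t α β : 𝕜} (hab : a < b) (hf : ∀ x ∈ Icc a b, f x = α * x + β)
    (ht : t ∈ Icc a b) : f t = f a + slope f a b * (t - a) := by
  have hslope : slope f a b = α := by
    rw [slope_def_field, hf a (left_mem_Icc.2 hab.le), hf b (right_mem_Icc.2 hab.le),
      div_eq_iff (sub_ne_zero.2 hab.ne')]
    ring
  rw [hslope, hf t ht, hf a (left_mem_Icc.2 hab.le)]
  ring

lemma integrable_inv_one_add_mul_sub_sq {a : ℝ} (ha : a ≠ 0) (s : ℝ) :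
    Integrable fun t : ℝ ↦ (1 + (a * (t - s)) ^ 2)⁻¹ :=
  (integrable_inv_one_add_sq.comp_mul_left' ha).comp_sub_right s

lemma integral_inv_one_add_mul_sub_sq (a s : ℝ) :
    ∫ t : ℝ, (1 + (a * (t - s)) ^ 2)⁻¹ = π / |a| := by
  rw [integral_sub_right_eq_self (fun t : ℝ ↦ (1 + (a * t) ^ 2)⁻¹) s,
    Measure.integral_comp_mul_left (fun t : ℝ ↦ (1 + t ^ 2)⁻¹) a,
    integral_univ_inv_one_add_sq, abs_inv, smul_eq_mul, inv_mul_eq_div]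

section Gagliardo

/-- The integrand of the squared `H^{1/2}` seminorm of `v`. On the diagonal it takes the junk value
`0 / 0 = 0`, which no integral sees. -/
noncomputable def gagliardoKernel (v : ℝ → ℝ) (s t : ℝ) : ℝ :=
  (v s - v t) ^ 2 / (s - t) ^ 2

/-- The square of the `H^{1/2}` (Gagliardo) seminorm of `v` on `S`, as an iterated Bochner integral.
It is meaningful when the kernel is integrable on `S ×ˢ S`. -/
noncomputable def gagliardoSq (v : ℝ → ℝ) (S : Set ℝ) : ℝ :=
  ∫ s in S, ∫ t in S, gagliardoKernel v s t

variable {v w : ℝ → ℝ} {S : Set ℝ} {s t : ℝ}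

lemma gagliardoSq_congr (hS : MeasurableSet S) (h : EqOn v w S) :
    gagliardoSq v S = gagliardoSq w S :=
  setIntegral_congr_fun hS fun s hs ↦ setIntegral_congr_fun hS fun t ht ↦ by
    simp only [gagliardoKernel, h hs, h ht]

lemma gagliardoKernel_nonneg (v : ℝ → ℝ) (s t : ℝ) : 0 ≤ gagliardoKernel v s t := by
  unfold gagliardoKernel
  positivity

lemma sq_le_gagliardoKernel {K : ℝ} (hK : 0 ≤ K) (hst : s ≠ t)
    (h : K * |s - t| ≤ |v s - v t|) : K ^ 2 ≤ gagliardoKernel v s t := by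
  have hpos : 0 < (s - t) ^ 2 := by
    have := sub_ne_zero.2 hst
    positivity
  rw [gagliardoKernel, le_div_iff₀ hpos, ← sq_abs (s - t), ← sq_abs (v s - v t), ← mul_pow]
  gcongr

lemma gagliardoKernel_le_sq {K : ℝ} (h : |v s - v t| ≤ K * |s - t|) :
    gagliardoKernel v s t ≤ K ^ 2 := by
  refine div_le_of_le_mul₀ (sq_nonneg _) (sq_nonneg _) ?_
  rw [← sq_abs (s - t), ← sq_abs (v s - v t), ← mul_pow]
  gcongr

lemma gagliardoKernel_le_cauchy {K D : ℝ} (hD : 0 < D) (hK : |v s - v t| ≤ K * |s - t|)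
    (hosc : |v s - v t| ≤ D) :
    gagliardoKernel v s t ≤ 2 * K ^ 2 * (1 + (K / D * (t - s)) ^ 2)⁻¹ := by
  have hlip : gagliardoKernel v s t ≤ K ^ 2 := gagliardoKernel_le_sq hK
  have hfar : gagliardoKernel v s t * (t - s) ^ 2 ≤ D ^ 2 :=
    calc gagliardoKernel v s t * (t - s) ^ 2 ≤ (v s - v t) ^ 2 := by
          rw [gagliardoKernel, ← neg_sub s t, neg_sq]
          exact mul_le_of_le_div₀ (sq_nonneg _) (sq_nonneg _) le_rfl
      _ = |v s - v t| ^ 2 := (sq_abs _).symm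
      _ ≤ D ^ 2 := by gcongr
  have hfar_scaled : gagliardoKernel v s t * (K / D * (t - s)) ^ 2 ≤ K ^ 2 :=
    calc gagliardoKernel v s t * (K / D * (t - s)) ^ 2
        = (K / D) ^ 2 * (gagliardoKernel v s t * (t - s) ^ 2) := by ring
      _ ≤ (K / D) ^ 2 * D ^ 2 := by gcongr
      _ = K ^ 2 := by field_simp
  rw [← div_eq_mul_inv, le_div_iff₀ (by positivity)]
  linarith

lemma integrable_gagliardoKernel_of_lipschitzOnWith {K : ℝ≥0} (hv : LipschitzOnWith K v S)
    (hS : MeasurableSet S) (hS_fin : volume S ≠ ⊤) :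
    Integrable (fun p : ℝ × ℝ ↦ gagliardoKernel v p.1 p.2)
      ((volume.restrict S).prod (volume.restrict S)) := by
  have : IsFiniteMeasure (volume.restrict S) := ⟨by simpa using hS_fin.lt_top⟩
  have hv_meas : AEMeasurable v (volume.restrict S) := hv.continuousOn.aemeasurable hS
  have hmeas : AEMeasurable (fun p : ℝ × ℝ ↦ gagliardoKernel v p.1 p.2)
      ((volume.restrict S).prod (volume.restrict S)) :=
    ((hv_meas.comp_fst.sub hv_meas.comp_snd).pow_const 2).div (by fun_prop)
  refine .of_bound hmeas.aestronglyMeasurable (K ^ 2) ?_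
  rw [Measure.prod_restrict]
  refine ae_restrict_of_forall_mem (hS.prod hS) fun p hp ↦ ?_
  rw [Real.norm_of_nonneg (gagliardoKernel_nonneg v _ _)]
  exact gagliardoKernel_le_sq (by simpa [Real.dist_eq] using hv.dist_le_mul _ hp.1 _ hp.2)

lemma sq_mul_volume_le_setIntegral_gagliardoKernel {T : Set ℝ} {K : ℝ} (hK : 0 ≤ K)
    (hT : MeasurableSet T) (hT_fin : volume T ≠ ⊤) (hint : IntegrableOn (gagliardoKernel v s) T)
    (h : ∀ t ∈ T, K * |s - t| ≤ |v s - v t|) :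
    K ^ 2 * volume.real T ≤ ∫ t in T, gagliardoKernel v s t := by
  have hne : ∀ᵐ t : ℝ, t ≠ s := by simp [ae_iff]
  calc K ^ 2 * volume.real T = ∫ _ in T, K ^ 2 := by
        rw [setIntegral_const, smul_eq_mul, mul_comm]
    _ ≤ ∫ t in T, gagliardoKernel v s t := by
        refine setIntegral_mono_on_ae (integrableOn_const hT_fin) hint hT ?_
        filter_upwards [hne] with t hts ht
        exact sq_le_gagliardoKernel hK hts.symm (h t ht)

theorem le_gagliardoSq {K δ : ℝ} (hS : MeasurableSet S) (hS_fin : volume S ≠ ⊤)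
    (hint : Integrable (fun p : ℝ × ℝ ↦ gagliardoKernel v p.1 p.2)
      ((volume.restrict S).prod (volume.restrict S)))
    (hK : 0 ≤ K)
    (h : ∀ s ∈ S, ∃ T ⊆ S, MeasurableSet T ∧ δ ≤ volume.real T ∧
      ∀ t ∈ T, K * |s - t| ≤ |v s - v t|) :
    K ^ 2 * δ * volume.real S ≤ gagliardoSq v S := by
  have hinner : ∀ᵐ s ∂volume.restrict S, K ^ 2 * δ ≤ ∫ t in S, gagliardoKernel v s t := by
    filter_upwards [hint.prod_right_ae, ae_restrict_mem hS] with s hs_int hs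
    obtain ⟨T, hTS, hT, hδ, hgrowth⟩ := h s hs
    calc K ^ 2 * δ ≤ K ^ 2 * volume.real T := by gcongr
      _ ≤ ∫ t in T, gagliardoKernel v s t :=
          sq_mul_volume_le_setIntegral_gagliardoKernel hK hT (measure_ne_top_of_subset hTS hS_fin)
            (IntegrableOn.mono_set hs_int hTS) hgrowth
      _ ≤ ∫ t in S, gagliardoKernel v s t :=
          setIntegral_mono_set hs_int (ae_of_all _ (gagliardoKernel_nonneg v s)) hTS.eventuallyLE
  calc K ^ 2 * δ * volume.real S = ∫ _ in S, K ^ 2 * δ := by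
        rw [setIntegral_const, smul_eq_mul, mul_comm]
    _ ≤ gagliardoSq v S :=
        integral_mono_ae (integrableOn_const hS_fin) hint.integral_prod_left hinner

lemma setIntegral_gagliardoKernel_le {K D : ℝ} (hK : 0 < K) (hD : 0 < D) (hS : MeasurableSet S)
    (hlip : ∀ t ∈ S, |v s - v t| ≤ K * |s - t|) (hosc : ∀ t ∈ S, |v s - v t| ≤ D) :
    ∫ t in S, gagliardoKernel v s t ≤ 2 * π * K * D := by
  have hint : Integrable fun t : ℝ ↦ 2 * K ^ 2 * (1 + (K / D * (t - s)) ^ 2)⁻¹ :=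
    (integrable_inv_one_add_mul_sub_sq (by positivity) s).const_mul _
  calc ∫ t in S, gagliardoKernel v s t
      ≤ ∫ t in S, 2 * K ^ 2 * (1 + (K / D * (t - s)) ^ 2)⁻¹ :=
        integral_mono_of_nonneg (ae_of_all _ (gagliardoKernel_nonneg v s)) hint.integrableOn <|
          ae_restrict_of_forall_mem hS fun t ht ↦
            gagliardoKernel_le_cauchy hD (hlip t ht) (hosc t ht)
    _ ≤ ∫ t : ℝ, 2 * K ^ 2 * (1 + (K / D * (t - s)) ^ 2)⁻¹ :=
        setIntegral_le_integral hint (ae_of_all _ fun t ↦ by positivity)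
    _ = 2 * π * K * D := by
        rw [integral_const_mul, integral_inv_one_add_mul_sub_sq, abs_of_pos (by positivity)]
        field_simp

theorem gagliardoSq_le_of_lipschitzOnWith {K : ℝ≥0} {D : ℝ} (hv : LipschitzOnWith K v S)
    (hK : 0 < K) (hD : 0 < D) (hosc : ∀ s ∈ S, ∀ t ∈ S, |v s - v t| ≤ D)
    (hS : MeasurableSet S) (hS_fin : volume S ≠ ⊤) :
    gagliardoSq v S ≤ 2 * π * K * D * volume.real S := by
  refine (Real.le_norm_self _).trans
    (norm_setIntegral_le_of_norm_le_const hS_fin.lt_top fun s hs ↦ ?_)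
  rw [Real.norm_of_nonneg (integral_nonneg (gagliardoKernel_nonneg v s))]
  refine setIntegral_gagliardoKernel_le (mod_cast hK) hD hS (fun t ht ↦ ?_) (hosc s hs)
  simpa [Real.dist_eq] using hv.dist_le_mul s hs t ht

end Gagliardo

section TriangleWave

/-- The triangle wave: the `2`-periodic function that is affine between consecutive integers and
takes the value `(-1)^n` at each integer `n`. The norm on `AddCircle 2` is the distance to the
nearest even integer. -/
noncomputable def triangleWave (x : ℝ) : ℝ :=
  1 - 2 * ‖(x : AddCircle (2 : ℝ))‖

lemma lipschitzWith_triangleWave : LipschitzWith 2 triangleWave := by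
  refine LipschitzWith.of_dist_le_mul fun x y ↦ ?_
  have hnorm : |‖(y : AddCircle (2 : ℝ))‖ - ‖(x : AddCircle (2 : ℝ))‖| ≤ |x - y| :=
    calc |‖(y : AddCircle (2 : ℝ))‖ - ‖(x : AddCircle (2 : ℝ))‖|
        ≤ ‖((y - x : ℝ) : AddCircle (2 : ℝ))‖ := by
          rw [AddCircle.coe_sub]
          exact abs_norm_sub_norm_le _ _
      _ ≤ |y - x| := QuotientAddGroup.norm_mk_le_norm
      _ = |x - y| := abs_sub_comm _ _
  have hsub : triangleWave x - triangleWave y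
      = 2 * (‖(y : AddCircle (2 : ℝ))‖ - ‖(x : AddCircle (2 : ℝ))‖) := by
    simp only [triangleWave]
    ring
  calc dist (triangleWave x) (triangleWave y)
      = 2 * |‖(y : AddCircle (2 : ℝ))‖ - ‖(x : AddCircle (2 : ℝ))‖| := by
        rw [Real.dist_eq, hsub, abs_mul, abs_two]
    _ ≤ 2 * |x - y| := by gcongr

lemma abs_triangleWave_le_one (x : ℝ) : |triangleWave x| ≤ 1 := by
  have hnonneg := norm_nonneg (x : AddCircle (2 : ℝ))
  have hle := AddCircle.norm_le_half_period (2 : ℝ) (x := x) two_ne_zero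
  rw [abs_two, div_self two_ne_zero] at hle
  rw [triangleWave, abs_le]
  constructor <;> linarith

lemma triangleWave_eq_of_abs_sub_le_one {x : ℝ} (k : ℤ) (hx : |x - 2 * k| ≤ 1) :
    triangleWave x = 1 - 2 * |x - 2 * k| := by
  have hcoe : (x : AddCircle (2 : ℝ)) = ((x - 2 * k : ℝ) : AddCircle (2 : ℝ)) := by
    have hperiod : ((2 * k : ℝ) : AddCircle (2 : ℝ)) = 0 :=
      (AddCircle.coe_eq_zero_iff 2).2 ⟨k, by simp [mul_comm]⟩
    rw [AddCircle.coe_sub, hperiod, sub_zero]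
  rw [triangleWave, hcoe, (AddCircle.norm_coe_eq_abs_iff 2 two_ne_zero).2 (by simpa using hx)]

lemma triangleWave_of_mem_Icc {n : ℤ} {x : ℝ} (hx : x ∈ Icc (n : ℝ) (n + 1)) :
    triangleWave x = (-1) ^ n * (1 - 2 * (x - n)) := by
  obtain ⟨hl, hr⟩ := hx
  obtain ⟨k, rfl | rfl⟩ := n.even_or_odd'
  · push_cast at hl hr ⊢
    have habs : |x - 2 * k| = x - 2 * k := abs_of_nonneg (by linarith)
    rw [triangleWave_eq_of_abs_sub_le_one k (by linarith), habs, (even_two_mul k).neg_one_zpow,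
      one_mul]
  · push_cast at hl hr ⊢
    have habs : |x - 2 * (k + 1 : ℤ)| = 2 * k + 2 - x := by
      push_cast
      rw [abs_of_nonpos] <;> linarith
    rw [triangleWave_eq_of_abs_sub_le_one (k + 1) (by linarith), habs,
      (odd_two_mul_add_one k).neg_one_zpow]
    ring

lemma abs_triangleWave_intCast (n : ℤ) : |triangleWave n| = 1 := by
  rw [triangleWave_of_mem_Icc (n := n) (by simp)]
  simp [abs_zpow]

lemma abs_triangleWave_sub_of_mem_Icc {n : ℤ} {x y : ℝ} (hx : x ∈ Icc (n : ℝ) (n + 1))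
    (hy : y ∈ Icc (n : ℝ) (n + 1)) : |triangleWave x - triangleWave y| = 2 * |x - y| := by
  have hsub : triangleWave x - triangleWave y = (-1) ^ n * (2 * (y - x)) := by
    rw [triangleWave_of_mem_Icc hx, triangleWave_of_mem_Icc hy]
    ring
  rw [hsub, abs_mul, abs_zpow, abs_neg, abs_one, one_zpow, one_mul, abs_mul, abs_two,
    abs_sub_comm]

lemma lipschitzWith_triangleWave_mul (a : ℝ) :
    LipschitzWith (2 * ‖a‖₊) fun t ↦ triangleWave (a * t) :=
  lipschitzWith_triangleWave.comp (lipschitzWith_smul a)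

theorem gagliardoSq_triangleWave_mul_le {a : ℝ} (ha : 0 < a) {S : Set ℝ} (hS : MeasurableSet S)
    (hS_fin : volume S ≠ ⊤) :
    gagliardoSq (fun t ↦ triangleWave (a * t)) S ≤ 8 * π * a * volume.real S := by
  have hosc (s t : ℝ) : |triangleWave (a * s) - triangleWave (a * t)| ≤ 2 := by
    linarith [abs_sub (triangleWave (a * s)) (triangleWave (a * t)),
      abs_triangleWave_le_one (a * s), abs_triangleWave_le_one (a * t)]
  refine (gagliardoSq_le_of_lipschitzOnWith (lipschitzWith_triangleWave_mul a).lipschitzOnWith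
    (mul_pos two_pos (nnnorm_pos.2 ha.ne')) two_pos (fun s _ t _ ↦ hosc s t) hS hS_fin).trans_eq ?_
  rw [NNReal.coe_mul, coe_nnnorm, Real.norm_of_nonneg ha.le, NNReal.coe_ofNat]
  ring

lemma sSup_abs_triangleWave_mul_image_Ioo {a : ℝ} (ha : 0 < a) (n : ℤ) :
    sSup ((fun t ↦ |triangleWave (a * t)|) '' Ioo ((n : ℝ) / a) ((n + 1) / a)) = 1 := by
  have hlt : (n : ℝ) / a < (n + 1) / a := div_lt_div_of_pos_right (lt_add_one _) ha
  have hval : |triangleWave (a * (n / a))| = 1 := by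
    rw [mul_div_cancel₀ _ ha.ne', abs_triangleWave_intCast]
  have hclosure : (n : ℝ) / a ∈ closure (Ioo ((n : ℝ) / a) ((n + 1) / a)) := by
    rw [closure_Ioo hlt.ne]
    exact left_mem_Icc.2 hlt.le
  have hlub := isLUB_image_of_mem_closure hclosure
    (lipschitzWith_triangleWave_mul a).continuous.abs.continuousWithinAt
    fun t _ ↦ (abs_triangleWave_le_one _).trans_eq hval.symm
  exact (hlub.csSup_eq ((nonempty_Ioo.2 hlt).image _)).trans hval

end TriangleWave

section UniformMesh

variable {N i : ℕ}

lemma exists_mem_uniformMesh_Icc (hN : 0 < N) {t : ℝ} (ht : t ∈ Ico (0 : ℝ) 1) :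
    ∃ i < N, t ∈ Icc ((i : ℝ) / N) ((i + 1) / N) := by
  have hN_pos : (0 : ℝ) < N := mod_cast hN
  have hnonneg : 0 ≤ N * t := mul_nonneg hN_pos.le ht.1
  refine ⟨⌊N * t⌋₊, (Nat.floor_lt hnonneg).2 (mul_lt_of_lt_one_right hN_pos ht.2), ?_⟩
  rw [← mul_mem_Icc_iff_mem_Icc_div hN_pos]
  exact ⟨Nat.floor_le hnonneg, (Nat.lt_floor_add_one _).le⟩

lemma uniformMesh_Ioo_subset (hi : i < N) :
    Ioo ((i : ℝ) / N) ((i + 1) / N) ⊆ Ioo 0 1 := by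
  have hN : (0 : ℝ) < N := mod_cast i.zero_le.trans_lt hi
  refine Ioo_subset_Ioo (by positivity) ((div_le_one hN).2 ?_)
  exact_mod_cast hi

lemma eqOn_triangleWave_mul {ψ : ℝ → ℝ} (hN : 0 < N)
    (haff : ∀ i < N, ∃ α β : ℝ, ∀ t ∈ Icc ((i : ℝ) / N) ((i + 1) / N), ψ t = α * t + β)
    (hnode : ∀ i ≤ N, ψ (i / N) = (-1) ^ i) :
    EqOn ψ (fun t ↦ triangleWave (N * t)) (Ico 0 1) := by
  intro t ht
  have hN_pos : (0 : ℝ) < N := mod_cast hN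
  obtain ⟨i, hi, hti⟩ := exists_mem_uniformMesh_Icc hN ht
  obtain ⟨α, β, hψ⟩ := haff i hi
  have hlt : (i : ℝ) / N < (i + 1) / N := div_lt_div_of_pos_right (lt_add_one _) hN_pos
  have hleft : ψ (i / N) = (-1) ^ i := hnode i hi.le
  have hright : ψ ((i + 1) / N) = -(-1) ^ i := by
    simpa [pow_succ] using hnode (i + 1) hi
  have hwave : triangleWave (N * t) = (-1) ^ i * (1 - 2 * (N * t - i)) := by
    simpa using triangleWave_of_mem_Icc (n := i)
      (by simpa using (mul_mem_Icc_iff_mem_Icc_div hN_pos).2 hti)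
  simp only [hwave]
  rw [eq_add_slope_mul_of_affine hlt hψ hti, slope_def_field, hleft, hright]
  field_simp
  ring

lemma sSup_abs_image_uniformMesh_Ioo {ψ : ℝ → ℝ}
    (hψ : EqOn ψ (fun t ↦ triangleWave (N * t)) (Ioo 0 1)) (hi : i < N) :
    sSup ((fun t ↦ |ψ t|) '' Ioo ((i : ℝ) / N) ((i + 1) / N)) = 1 := by
  have hN : (0 : ℝ) < N := mod_cast i.zero_le.trans_lt hi
  rw [image_congr fun t ht ↦ congrArg abs (hψ (uniformMesh_Ioo_subset hi ht))]
  simpa using sSup_abs_triangleWave_mul_image_Ioo hN i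

theorem le_gagliardoSq_triangleWave_mul (hN : 0 < N) :
    4 * (N : ℝ) ≤ gagliardoSq (fun t ↦ triangleWave (N * t)) (Ioo 0 1) := by
  have hN_pos : (0 : ℝ) < N := mod_cast hN
  have hint := integrable_gagliardoKernel_of_lipschitzOnWith
    (lipschitzWith_triangleWave_mul N).lipschitzOnWith measurableSet_Ioo
    (measure_Ioo_lt_top (a := (0 : ℝ)) (b := 1)).ne
  calc 4 * (N : ℝ) = (2 * N) ^ 2 * (1 / N) * volume.real (Ioo (0 : ℝ) 1) := by
        rw [Real.volume_real_Ioo_of_le zero_le_one]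
        field_simp
        ring
    _ ≤ gagliardoSq (fun t ↦ triangleWave (N * t)) (Ioo 0 1) := by
        refine le_gagliardoSq measurableSet_Ioo measure_Ioo_lt_top.ne hint (by positivity)
          fun s hs ↦ ?_
        obtain ⟨i, hi, hsi⟩ := exists_mem_uniformMesh_Icc hN (Ioo_subset_Ico_self hs)
        refine ⟨Ioo (i / N) ((i + 1) / N), uniformMesh_Ioo_subset hi, measurableSet_Ioo, ?_, ?_⟩
        · rw [Real.volume_real_Ioo_of_le (by gcongr; exact (lt_add_one _).le)]
          exact le_of_eq (by ring)
        · intro t ht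
          have hmem {x : ℝ} (hx : x ∈ Icc ((i : ℝ) / N) ((i + 1) / N)) :
              N * x ∈ Icc ((i : ℤ) : ℝ) ((i : ℤ) + 1) := by
            simpa using (mul_mem_Icc_iff_mem_Icc_div hN_pos).2 hx
          rw [abs_triangleWave_sub_of_mem_Icc (hmem hsi) (hmem (Ioo_subset_Icc_self ht)),
            ← mul_sub, abs_mul, abs_of_pos hN_pos, mul_assoc]

end UniformMesh

/-- For `N ≥ 1`, let `ψ_N : [0,1] → ℝ` be the continuous piecewise linear
function on the uniform mesh with nodes `i/N` taking the value `(-1)^i` at the `i`-th node.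
Then `Σ_{i} (sup_{e_i} |ψ_N|)² = N`, and there are constants `c, C > 0` independent of `N`
such that `c·N ≤ |ψ_N|²_{1/2} ≤ C·N` for all `N ≥ 2`: the estimate
`|v|²_{1/2} ≲ log(1+R) Σ_e ‖v‖²_{L∞(e)}` is sharp with respect to the number of elements. -/
theorem gagliardo_sharpness_oscillating_piecewise_linear :
    ∃ c C : ℝ, 0 < c ∧ 0 < C ∧
      ∀ (N : ℕ) (ψ : ℝ → ℝ),
        ContinuousOn ψ (Icc (0 : ℝ) 1) →
        -- `ψ` is affine on each element of the uniform mesh with `N` elements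
        (∀ i < N, ∃ α β : ℝ,
          ∀ t ∈ Icc ((i : ℝ) / N) (((i : ℝ) + 1) / N), ψ t = α * t + β) →
        -- nodal values `ψ(i/N) = (-1)^i`
        (∀ i ≤ N, ψ ((i : ℝ) / N) = (-1 : ℝ) ^ i) →
        (1 ≤ N →
          ∑ i ∈ Finset.range N,
            (sSup ((fun t => |ψ t|) '' Ioo ((i : ℝ) / N) (((i : ℝ) + 1) / N))) ^ 2
            = (N : ℝ)) ∧
        (2 ≤ N →
          c * N ≤ (∫ s in Ioo (0 : ℝ) 1, ∫ t in Ioo (0 : ℝ) 1,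
              (ψ s - ψ t) ^ 2 / (s - t) ^ 2) ∧
          (∫ s in Ioo (0 : ℝ) 1, ∫ t in Ioo (0 : ℝ) 1,
              (ψ s - ψ t) ^ 2 / (s - t) ^ 2) ≤ C * N) := by
  refine ⟨4, 8 * π, by norm_num, by positivity, fun N ψ _ haff hnode ↦
    ⟨fun hN ↦ ?_, fun hN ↦ ?_⟩⟩
  · have hψ := eqOn_triangleWave_mul hN haff hnode
    rw [Finset.sum_congr rfl fun i hi ↦ by
      rw [sSup_abs_image_uniformMesh_Ioo (hψ.mono Ioo_subset_Ico_self) (Finset.mem_range.1 hi)]]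
    simp
  · have hN : 0 < N := by lia
    have hψ : gagliardoSq ψ (Ioo 0 1) = gagliardoSq (fun t ↦ triangleWave (N * t)) (Ioo 0 1) :=
      gagliardoSq_congr measurableSet_Ioo
        ((eqOn_triangleWave_mul hN haff hnode).mono Ioo_subset_Ico_self)
    change 4 * (N : ℝ) ≤ gagliardoSq ψ (Ioo 0 1) ∧ gagliardoSq ψ (Ioo 0 1) ≤ 8 * π * N
    rw [hψ]
    refine ⟨le_gagliardoSq_triangleWave_mul hN, ?_⟩
    simpa using gagliardoSq_triangleWave_mul_le (a := N) (mod_cast hN) measurableSet_Ioo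
      (measure_Ioo_lt_top (a := (0 : ℝ)) (b := 1)).ne
end

section
/- For every c̄ ≥ 1 there exists a constant C > 0 (depending only on c̄) with the following property: for every compact interval [a,b], every mesh 𝒯 of [a,b] with nodes a = x_0 < ⋯ < x_r = b that is quasi-uniform with constant c̄, and every bounded measurable function w : [a,b] → ℝ, the sum over all non-adjacent pairs of elements satisfies Σ_{i=1}^{r−2} Σ_{j=i+2}^{r} ∫_{e_i} ∫_{e_j} (w(x) − w(y))²/(x − y)² dy dx ≤ C · Σ_{i=1}^{r} (sup_{x ∈ e_i} |w(x)|)². -/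
open MeasureTheory Set

/-!
Let `h` be the smallest element length, so that every element has length at most `c * h`. Two
elements of indices `i` and `j ≥ i + 2` have `j - i - 1` elements between them, so they lie at
distance at least `(j - i - 1) * h`, and the double integral over the pair is at most
`2 * c ^ 2 * (S i ^ 2 + S j ^ 2) / (j - i - 1) ^ 2`, where `S i` bounds `|w|` on the `i`-th element.
The length `h` has cancelled: the kernel `1 / (j - i - 1) ^ 2` is summable in either index,
uniformly in the other, which is Schur's test.
-/

section OrderedRing

variable {R : Type*} [CommRing R] [LinearOrder R] [IsStrictOrderedRing R]

lemma sum_sum_Ico_kernel_mul_add_le {κ f : ℕ → R} {m : ℕ} {B : R} (hf : ∀ i, 0 ≤ f i)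
    (hκ : ∀ n, ∑ k ∈ Finset.Ico m n, κ k ≤ B) (r : ℕ) :
    ∑ i ∈ Finset.range r, ∑ j ∈ Finset.Ico (i + m) r, κ (j - i) * (f i + f j) ≤
      2 * B * ∑ i ∈ Finset.range r, f i := by
  have row_sum_le : ∀ i ∈ Finset.range r, ∑ j ∈ Finset.Ico (i + m) r, κ (j - i) ≤ B := by
    intro i hi
    have hir : r - i + i = r := Nat.sub_add_cancel (Finset.mem_range.1 hi).le
    have shift := Finset.sum_Ico_add' (fun j => κ (j - i)) m (r - i) i
    rw [hir, add_comm m i] at shift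
    simpa only [← shift, Nat.add_sub_cancel] using hκ (r - i)
  have col_sum_le : ∀ j, ∑ i ∈ Finset.range (j + 1 - m), κ (j - i) ≤ B := by
    intro j
    rw [Finset.range_eq_Ico, Finset.sum_Ico_reflect _ _ (Nat.sub_le _ _)]
    have : Finset.Ico (j + 1 - (j + 1 - m)) (j + 1 - 0) = Finset.Ico m (j + 1) := by
      ext k
      simp only [Finset.mem_Ico]
      omega
    exact this ▸ hκ (j + 1)
  have swap : ∑ i ∈ Finset.range r, ∑ j ∈ Finset.Ico (i + m) r, κ (j - i) * f j =
      ∑ j ∈ Finset.range r, ∑ i ∈ Finset.range (j + 1 - m), κ (j - i) * f j :=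
    Finset.sum_comm' fun i j => by simp only [Finset.mem_range, Finset.mem_Ico]; omega
  calc ∑ i ∈ Finset.range r, ∑ j ∈ Finset.Ico (i + m) r, κ (j - i) * (f i + f j)
      = ∑ i ∈ Finset.range r, (∑ j ∈ Finset.Ico (i + m) r, κ (j - i)) * f i +
          ∑ j ∈ Finset.range r, (∑ i ∈ Finset.range (j + 1 - m), κ (j - i)) * f j := by
        simp only [mul_add, Finset.sum_add_distrib, swap, Finset.sum_mul]
    _ ≤ ∑ i ∈ Finset.range r, B * f i + ∑ j ∈ Finset.range r, B * f j := by
        gcongr with i hi j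
        exacts [hf i, row_sum_le i hi, hf j, col_sum_le j]
    _ = 2 * B * ∑ i ∈ Finset.range r, f i := by rw [← Finset.mul_sum]; ring

lemma sub_mul_le_sub_of_forall_le_succ_sub {x : ℕ → R} {r i j : ℕ} {h : R}
    (hx : ∀ k < r, h ≤ x (k + 1) - x k) (hij : i ≤ j) (hj : j ≤ r) :
    ((j : R) - i) * h ≤ x j - x i := by
  induction j, hij using Nat.le_induction with
  | base => simp
  | succ j _ ih =>
    have := ih (by omega)
    have := hx j hj
    push_cast
    linarith

end OrderedRing

lemma sum_Ico_two_inv_sub_one_sq_le (n : ℕ) :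
    ∑ k ∈ Finset.Ico 2 n, (((k : ℝ) - 1) ^ 2)⁻¹ ≤ 2 := by
  cases n with
  | zero => simp
  | succ n =>
    rw [← Finset.sum_Ico_add' _ 1 n 1]
    simpa [← Finset.Ico_succ_left_eq_Ioo] using sum_Ioo_inv_sq_le (α := ℝ) 0 n

section DoubleIntegral

variable {E : Type*} [SeminormedAddCommGroup E]

lemma norm_sub_sq_le_two_mul (x y : E) : ‖x - y‖ ^ 2 ≤ 2 * (‖x‖ ^ 2 + ‖y‖ ^ 2) :=
  (pow_le_pow_left₀ (norm_nonneg _) (norm_sub_le x y) 2).trans add_sq_le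

lemma setIntegral_setIntegral_norm_sub_sq_div_dist_sq_le {X : Type*} [PseudoMetricSpace X]
    [MeasurableSpace X] {μ ν : Measure X} {w : X → E} {A B : Set X} {S T D : ℝ}
    (hA : μ A < ⊤) (hB : ν B < ⊤) (hD : 0 < D) (hdist : ∀ s ∈ A, ∀ t ∈ B, D ≤ dist s t)
    (hS : ∀ s ∈ A, ‖w s‖ ≤ S) (hT : ∀ t ∈ B, ‖w t‖ ≤ T) :
    ∫ s in A, ∫ t in B, ‖w s - w t‖ ^ 2 / dist s t ^ 2 ∂ν ∂μ ≤
      2 * (S ^ 2 + T ^ 2) / D ^ 2 * ν.real B * μ.real A := by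
  have integrand_le : ∀ s ∈ A, ∀ t ∈ B,
      ‖‖w s - w t‖ ^ 2 / dist s t ^ 2‖ ≤ 2 * (S ^ 2 + T ^ 2) / D ^ 2 := by
    intro s hs t ht
    rw [Real.norm_of_nonneg (by positivity)]
    calc ‖w s - w t‖ ^ 2 / dist s t ^ 2
        ≤ 2 * (‖w s‖ ^ 2 + ‖w t‖ ^ 2) / D ^ 2 := by
          gcongr
          exacts [norm_sub_sq_le_two_mul _ _, hdist s hs t ht]
      _ ≤ 2 * (S ^ 2 + T ^ 2) / D ^ 2 := by
          gcongr
          exacts [hS s hs, hT t ht]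
  exact (Real.le_norm_self _).trans <| norm_setIntegral_le_of_norm_le_const hA fun s hs =>
    norm_setIntegral_le_of_norm_le_const hB (integrand_le s hs)

end DoubleIntegral

/-- The numbers `ξ 0 < ⋯ < ξ r` are the nodes of a mesh with `r` elements `Ioo (ξ i) (ξ (i + 1))`,
quasi-uniform with constant `c`. The bound on the ratio of the largest to the smallest element
length is imposed on all pairs of elements; the values of `ξ` beyond `r` are irrelevant. -/
structure IsQuasiUniformMesh (c : ℝ) (r : ℕ) (ξ : ℕ → ℝ) : Prop where
  lt_succ : ∀ i < r, ξ i < ξ (i + 1)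
  length_le : ∀ i < r, ∀ j < r, ξ (i + 1) - ξ i ≤ c * (ξ (j + 1) - ξ j)

lemma IsQuasiUniformMesh.exists_length_mem_Icc {c : ℝ} {r : ℕ} {ξ : ℕ → ℝ}
    (hξ : IsQuasiUniformMesh c r ξ) :
    ∃ h > 0, ∀ i < r, ξ (i + 1) - ξ i ∈ Icc h (c * h) := by
  rcases r.eq_zero_or_pos with rfl | hr
  · exact ⟨1, one_pos, by simp⟩
  obtain ⟨k, hk, hmin⟩ := (Finset.range r).exists_min_image (fun i => ξ (i + 1) - ξ i)
    ⟨0, Finset.mem_range.2 hr⟩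
  rw [Finset.mem_range] at hk
  exact ⟨ξ (k + 1) - ξ k, sub_pos.2 (hξ.lt_succ k hk), fun i hi =>
    ⟨hmin i (Finset.mem_range.2 hi), hξ.length_le i hi k hk⟩⟩

lemma IsQuasiUniformMesh.monotoneOn {c : ℝ} {r : ℕ} {ξ : ℕ → ℝ}
    (hξ : IsQuasiUniformMesh c r ξ) : MonotoneOn ξ (Iic r) :=
  monotoneOn_of_le_add_one ordConnected_Iic fun i _ _ hi => (hξ.lt_succ i hi).le

lemma IsQuasiUniformMesh.element_subset_Icc {c : ℝ} {r i : ℕ} {ξ : ℕ → ℝ}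
    (hξ : IsQuasiUniformMesh c r ξ) (hi : i < r) :
    Ioo (ξ i) (ξ (i + 1)) ⊆ Icc (ξ 0) (ξ r) :=
  Ioo_subset_Icc_self.trans <| Icc_subset_Icc
    (hξ.monotoneOn (mem_Iic.2 r.zero_le) (mem_Iic.2 hi.le) i.zero_le)
    (hξ.monotoneOn (mem_Iic.2 hi) (mem_Iic.2 le_rfl) hi)

section Mesh

variable {E : Type*} [SeminormedAddCommGroup E] {w : ℝ → E} {ξ S : ℕ → ℝ} {c : ℝ} {r : ℕ}

lemma setIntegral_setIntegral_nonadjacent_le {h : ℝ} {i j : ℕ} (hh : 0 < h)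
    (hξ : ∀ k < r, ξ (k + 1) - ξ k ∈ Icc h (c * h))
    (hS : ∀ k < r, ∀ s ∈ Ioo (ξ k) (ξ (k + 1)), ‖w s‖ ≤ S k) (hij : i + 2 ≤ j) (hj : j < r) :
    ∫ s in Ioo (ξ i) (ξ (i + 1)), ∫ t in Ioo (ξ j) (ξ (j + 1)),
        ‖w s - w t‖ ^ 2 / (s - t) ^ 2 ≤
      2 * c ^ 2 * ((((j - i : ℕ) : ℝ) - 1) ^ 2)⁻¹ * (S i ^ 2 + S j ^ 2) := by
  have hi : i < r := by omega
  set d : ℝ := ((j - i : ℕ) : ℝ) - 1 with hd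
  have d_pos : 0 < d := by
    have : (2 : ℝ) ≤ ((j - i : ℕ) : ℝ) := by exact_mod_cast (by omega : 2 ≤ j - i)
    linarith
  have gap : d * h ≤ ξ j - ξ (i + 1) := by
    have := sub_mul_le_sub_of_forall_le_succ_sub (fun k hk => (hξ k hk).1)
      (by omega : i + 1 ≤ j) hj.le
    rw [hd, Nat.cast_sub (by omega : i ≤ j)]
    push_cast at this
    linarith
  have dist_ge : ∀ s ∈ Ioo (ξ i) (ξ (i + 1)), ∀ t ∈ Ioo (ξ j) (ξ (j + 1)), d * h ≤ dist s t := by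
    intro s hs t ht
    rw [dist_comm, Real.dist_eq]
    linarith [le_abs_self (t - s), hs.2, ht.1]
  have volume_real_mem : ∀ k < r, volume.real (Ioo (ξ k) (ξ (k + 1))) ∈ Icc 0 (c * h) := by
    intro k hk
    rw [Real.volume_real_Ioo_of_le (sub_nonneg.1 (hh.le.trans (hξ k hk).1))]
    exact ⟨hh.le.trans (hξ k hk).1, (hξ k hk).2⟩
  have bound := setIntegral_setIntegral_norm_sub_sq_div_dist_sq_le (μ := volume) (ν := volume)
    measure_Ioo_lt_top measure_Ioo_lt_top (by positivity) dist_ge (hS i hi) (hS j hj)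
  simp only [Real.dist_eq, sq_abs] at bound
  calc _ ≤ 2 * (S i ^ 2 + S j ^ 2) / (d * h) ^ 2 * volume.real (Ioo (ξ j) (ξ (j + 1))) *
          volume.real (Ioo (ξ i) (ξ (i + 1))) := bound
    _ ≤ 2 * (S i ^ 2 + S j ^ 2) / (d * h) ^ 2 * (c * h) * (c * h) := by
        have := (volume_real_mem j hj).1.trans (volume_real_mem j hj).2
        gcongr
        exacts [(volume_real_mem j hj).2, (volume_real_mem i hi).2]
    _ = 2 * c ^ 2 * (d ^ 2)⁻¹ * (S i ^ 2 + S j ^ 2) := by field_simp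

lemma IsQuasiUniformMesh.sum_nonadjacent_le (hξ : IsQuasiUniformMesh c r ξ)
    (hS : ∀ i < r, ∀ s ∈ Ioo (ξ i) (ξ (i + 1)), ‖w s‖ ≤ S i) :
    ∑ i ∈ Finset.range r, ∑ j ∈ Finset.Ico (i + 2) r,
        ∫ s in Ioo (ξ i) (ξ (i + 1)), ∫ t in Ioo (ξ j) (ξ (j + 1)),
          ‖w s - w t‖ ^ 2 / (s - t) ^ 2 ≤
      8 * c ^ 2 * ∑ i ∈ Finset.range r, S i ^ 2 := by
  obtain ⟨h, h_pos, h_length⟩ := hξ.exists_length_mem_Icc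
  calc _ ≤ ∑ i ∈ Finset.range r, ∑ j ∈ Finset.Ico (i + 2) r,
          2 * c ^ 2 * ((((j - i : ℕ) : ℝ) - 1) ^ 2)⁻¹ * (S i ^ 2 + S j ^ 2) := by
        refine Finset.sum_le_sum fun i _ => Finset.sum_le_sum fun j hj => ?_
        obtain ⟨hij, hjr⟩ := Finset.mem_Ico.1 hj
        exact setIntegral_setIntegral_nonadjacent_le h_pos h_length hS hij hjr
    _ = 2 * c ^ 2 * ∑ i ∈ Finset.range r, ∑ j ∈ Finset.Ico (i + 2) r,
          ((((j - i : ℕ) : ℝ) - 1) ^ 2)⁻¹ * (S i ^ 2 + S j ^ 2) := by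
        simp only [Finset.mul_sum, mul_assoc]
    _ ≤ 2 * c ^ 2 * (2 * 2 * ∑ i ∈ Finset.range r, S i ^ 2) := by
        gcongr
        exact sum_sum_Ico_kernel_mul_add_le (κ := fun k => (((k : ℝ) - 1) ^ 2)⁻¹)
          (fun i => sq_nonneg (S i)) sum_Ico_two_inv_sub_one_sq_le r
    _ = 8 * c ^ 2 * ∑ i ∈ Finset.range r, S i ^ 2 := by ring

theorem nonadjacent_pairs_bound_general (hξ : IsQuasiUniformMesh c r ξ)
    (_hmeas : AEStronglyMeasurable w (volume.restrict (Icc (ξ 0) (ξ r))))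
    (hbdd : ∃ M : ℝ, ∀ t ∈ Icc (ξ 0) (ξ r), ‖w t‖ ≤ M) :
    ∑ i ∈ Finset.range r, ∑ j ∈ Finset.Ico (i + 2) r,
        ∫ s in Ioo (ξ i) (ξ (i + 1)), ∫ t in Ioo (ξ j) (ξ (j + 1)),
          ‖w s - w t‖ ^ 2 / (s - t) ^ 2 ≤
      8 * c ^ 2 * ∑ i ∈ Finset.range r,
        (sSup ((fun t => ‖w t‖) '' Ioo (ξ i) (ξ (i + 1)))) ^ 2 := by
  obtain ⟨M, hM⟩ := hbdd
  refine hξ.sum_nonadjacent_le fun i hi s hs => le_csSup ⟨M, ?_⟩ (mem_image_of_mem _ hs)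
  exact forall_mem_image.2 fun t ht => hM t (hξ.element_subset_Icc hi ht)

end Mesh

/-- For every `cBar ≥ 1` there is `C > 0` (depending only on `cBar`) such
that for every compact interval `[a,b]`, every quasi-uniform mesh of `[a,b]` with constant
`cBar`, and every bounded measurable `w : [a,b] → ℝ`, the sum over all non-adjacent pairs of
elements of the double integrals of `(w(x)-w(y))²/(x-y)²` is bounded by
`C · Σ_i (sup_{e_i} |w|)²`. -/
theorem nonadjacent_pairs_bound (cBar : ℝ) (hc : 1 ≤ cBar) :
    ∃ C : ℝ, 0 < C ∧
      ∀ (a b : ℝ) (_hab : a < b) (r : ℕ) (_hr : 0 < r) (ξ : ℕ → ℝ)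
        (_h0 : ξ 0 = a) (_hr' : ξ r = b) (_hmono : ∀ i < r, ξ i < ξ (i + 1))
        -- quasi-uniformity: the ratio of any two element lengths is at most `cBar`
        (_hqu : ∀ i < r, ∀ j < r, ξ (i + 1) - ξ i ≤ cBar * (ξ (j + 1) - ξ j))
        (w : ℝ → ℝ) (_hmeas : Measurable w)
        (_hbdd : ∃ M : ℝ, ∀ t ∈ Icc a b, |w t| ≤ M),
        (∑ i ∈ Finset.range r, ∑ j ∈ Finset.Ico (i + 2) r,
            ∫ s in Ioo (ξ i) (ξ (i + 1)), ∫ t in Ioo (ξ j) (ξ (j + 1)),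
              (w s - w t) ^ 2 / (s - t) ^ 2) ≤
          C * ∑ i ∈ Finset.range r,
              (sSup ((fun t => |w t|) '' Ioo (ξ i) (ξ (i + 1)))) ^ 2 := by
  refine ⟨8 * cBar ^ 2, by positivity, ?_⟩
  rintro _ _ - r - ξ rfl rfl hmono hqu w hmeas hbdd
  simpa only [Real.norm_eq_abs, sq_abs] using
    nonadjacent_pairs_bound_general ⟨hmono, hqu⟩ hmeas.aestronglyMeasurable hbdd
end

section
/- For every c̄ ≥ 1 and every k ∈ ℕ there exists a constant C > 0 (depending only on c̄ and k) with the following property: for every compact interval [a,b], every mesh 𝒯 of [a,b] with nodes a = x_0 < ⋯ < x_r = b that is quasi-uniform with constant c̄, and every w ∈ 𝕊_k(𝒯), the sum over all pairs of equal or adjacent elements satisfies Σ_{i=1}^{r} Σ_{j, |j−i| ≤ 1, 1 ≤ j ≤ r} ∫_{e_i} ∫_{e_j} (w(x) − w(y))²/(x − y)² dy dx ≤ C · Σ_{i=1}^{r} (sup_{x ∈ e_i} |w(x)|)². -/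
/-!
On a polynomial of degree `≤ k` an inverse estimate bounds the Lipschitz constant on an element of
length `h` by `M / h` times the supremum, where `M` depends on `k` alone: on the unit interval this
is Lagrange interpolation, and the general case follows by scaling. By continuity, `w` is Lipschitz
across the common node of two adjacent elements with the larger of their constants `K i`, `K j`,
so the integrand over `e i × e j` is at most `K i ^ 2 + K j ^ 2`. Local quasi-uniformity bounds
`(K i ^ 2 + K j ^ 2) * (h i * h j)` by a multiple of `(K i * h i) ^ 2 + (K j * h j) ^ 2`, and every
element is paired with at most three.
-/

open MeasureTheory Set
open Polynomial
open scoped NNReal Finset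

section InverseEstimate

theorem eval_eq_sum_eval_mul_eval_lagrangeBasis {F ι : Type*} [Field F] [DecidableEq ι]
    {s : Finset ι} {v : ι → F} {p : F[X]} (hv : InjOn v s) (hp : p.degree < #s) (x : F) :
    p.eval x = ∑ i ∈ s, p.eval (v i) * (Lagrange.basis s v i).eval x := by
  conv_lhs => rw [Lagrange.eq_interpolate hv hp]
  simp only [Lagrange.interpolate_apply, eval_finsetSum, eval_mul, eval_C]

theorem exists_lipschitzOnWith_eval_of_abs_eval_le_s4 {A B : Set ℝ} (hA : A.Infinite)
    (hB : IsCompact B) (k : ℕ) :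
    ∃ M : ℝ≥0, ∀ p : ℝ[X], p.natDegree ≤ k → ∀ S : ℝ≥0, (∀ t ∈ A, |p.eval t| ≤ S) →
      LipschitzOnWith (M * S) (fun t ↦ p.eval t) B := by
  obtain ⟨N, hNA, hN⟩ := hA.exists_subset_card_eq (k + 1)
  have basis_lipschitz (ν : ℝ) : ∃ K, LipschitzOnWith K (Lagrange.basis N id ν).eval B :=
    LocallyLipschitzOn.exists_lipschitzOnWith_of_compact hB
      (contDiff_aeval _ 1).locallyLipschitz.locallyLipschitzOn
  choose K hK using basis_lipschitz
  refine ⟨∑ ν ∈ N, K ν, fun p hp S hS ↦ .of_dist_le_mul fun x hx y hy ↦ ?_⟩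
  have hdeg : p.degree < #N := by
    rw [hN]
    exact degree_le_natDegree.trans_lt (mod_cast Nat.lt_succ_of_le hp)
  have expand := eval_eq_sum_eval_mul_eval_lagrangeBasis (injOn_id _) hdeg
  calc dist (p.eval x) (p.eval y)
      ≤ ∑ ν ∈ N, dist (p.eval ν * (Lagrange.basis N id ν).eval x)
          (p.eval ν * (Lagrange.basis N id ν).eval y) := by
        rw [expand x, expand y]
        exact dist_sum_sum_le _ _ _
    _ ≤ ∑ ν ∈ N, S * (K ν * dist x y) := by
        refine Finset.sum_le_sum fun ν hν ↦ ?_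
        rw [dist_eq_norm, ← mul_sub, norm_mul, ← dist_eq_norm]
        exact mul_le_mul (hS ν (hNA hν)) ((hK ν).dist_le_mul x hx y hy) dist_nonneg S.coe_nonneg
    _ = ↑((∑ ν ∈ N, K ν) * S) * dist x y := by
        push_cast
        rw [← Finset.mul_sum, ← Finset.sum_mul]
        ring

theorem exists_lipschitzOnWith_eval_Icc_of_abs_eval_le (k : ℕ) :
    ∃ M : ℝ≥0, ∀ α β : ℝ, α < β → ∀ p : ℝ[X], p.natDegree ≤ k → ∀ S : ℝ≥0,
      (∀ t ∈ Ioo α β, |p.eval t| ≤ S) →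
        LipschitzOnWith (M * S / nndist α β) (fun t ↦ p.eval t) (Icc α β) := by
  obtain ⟨M, hM⟩ :=
    exists_lipschitzOnWith_eval_of_abs_eval_le_s4 (Ioo_infinite zero_lt_one) (isCompact_Icc (b := 1)) k
  refine ⟨M, fun α β hαβ p hp S hS ↦ .of_dist_le_mul fun x hx y hy ↦ ?_⟩
  have hd : 0 < β - α := sub_pos.mpr hαβ
  set q : ℝ[X] := p.comp (C (β - α) * X + C α) with hq
  have q_eval (u : ℝ) : q.eval u = p.eval ((β - α) * u + α) := by simp [hq]
  have q_natDegree : q.natDegree ≤ k := by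
    rwa [hq, natDegree_comp, natDegree_linear hd.ne', mul_one]
  have q_bound (u : ℝ) (hu : u ∈ Ioo 0 1) : |q.eval u| ≤ S := by
    rw [q_eval]
    exact hS _ ⟨by nlinarith [hu.1], by nlinarith [hu.2]⟩
  have ref_mem {z : ℝ} (hz : z ∈ Icc α β) : (z - α) / (β - α) ∈ Icc (0 : ℝ) 1 :=
    ⟨div_nonneg (sub_nonneg.mpr hz.1) hd.le,
      (div_le_one hd).mpr (sub_le_sub_right hz.2 α)⟩
  have q_ref (z : ℝ) : q.eval ((z - α) / (β - α)) = p.eval z := by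
    rw [q_eval, mul_div_cancel₀ _ hd.ne', sub_add_cancel]
  calc dist (p.eval x) (p.eval y)
      ≤ ↑(M * S) * dist ((x - α) / (β - α)) ((y - α) / (β - α)) := by
        simpa only [q_ref] using
          (hM q q_natDegree S q_bound).dist_le_mul _ (ref_mem hx) _ (ref_mem hy)
    _ = ↑(M * S / nndist α β) * dist x y := by
        push_cast
        rw [dist_comm α β, Real.dist_eq, Real.dist_eq, Real.dist_eq, ← sub_div,
          sub_sub_sub_cancel_right, abs_div, abs_of_pos hd]
        ring

theorem exists_lipschitzOnWith_mul_sub_le_sSup (k : ℕ) :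
    ∃ M : ℝ≥0, ∀ α β : ℝ, α < β → ∀ w : ℝ → ℝ, ContinuousOn w (Icc α β) →
      (∃ p : ℝ[X], p.natDegree ≤ k ∧ ∀ t ∈ Ioo α β, w t = p.eval t) →
        ∃ K : ℝ≥0, LipschitzOnWith K w (Icc α β) ∧
          K * (β - α) ≤ M * sSup ((fun t ↦ |w t|) '' Ioo α β) := by
  obtain ⟨M, hM⟩ := exists_lipschitzOnWith_eval_Icc_of_abs_eval_le k
  refine ⟨M, fun α β hαβ w hw ⟨p, hp, hwp⟩ ↦ ?_⟩
  have hd : 0 < β - α := sub_pos.mpr hαβ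
  have w_eq : EqOn w p.eval (Icc α β) :=
    EqOn.of_subset_closure hwp hw p.continuous.continuousOn Ioo_subset_Icc_self
      (closure_Ioo hαβ.ne).ge
  have w_bdd : BddAbove ((fun t ↦ |w t|) '' Ioo α β) :=
    (isCompact_Icc.bddAbove_image hw.abs).mono (image_mono Ioo_subset_Icc_self)
  lift sSup ((fun t ↦ |w t|) '' Ioo α β) to ℝ≥0 using
    Real.sSup_nonneg (forall_mem_image.mpr fun t _ ↦ abs_nonneg (w t)) with S hS
  have p_le (t : ℝ) (ht : t ∈ Ioo α β) : |p.eval t| ≤ S := by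
    rw [hS, ← hwp t ht]
    exact le_csSup w_bdd (mem_image_of_mem _ ht)
  refine ⟨M * S / nndist α β, fun x hx y hy ↦ ?_, ?_⟩
  · rw [w_eq hx, w_eq hy]
    exact hM α β hαβ p hp S p_le hx hy
  · push_cast
    rw [dist_comm, Real.dist_eq, abs_of_pos hd, div_mul_cancel₀ _ hd.ne']

end InverseEstimate

section Slobodeckij

/-- The contribution of `A × B` to the squared Sobolev–Slobodeckij seminorm of order `1 / 2` of `w`.
The integrand takes the value `0` on the diagonal, and the integral is `0` if it diverges. -/
noncomputable def slobodeckijEnergy (w : ℝ → ℝ) (A B : Set ℝ) : ℝ :=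
  ∫ s in A, ∫ t in B, (w s - w t) ^ 2 / (s - t) ^ 2

theorem slobodeckijEnergy_le_of_lipschitzOnWith {w : ℝ → ℝ} {K : ℝ≥0} {s A B : Set ℝ}
    (hw : LipschitzOnWith K w s) (hAs : A ⊆ s) (hBs : B ⊆ s)
    (hA : volume A < ⊤) (hB : volume B < ⊤) :
    slobodeckijEnergy w A B ≤ K ^ 2 * (volume.real A * volume.real B) := by
  have integrand_le {x y : ℝ} (hx : x ∈ A) (hy : y ∈ B) :
      ‖(w x - w y) ^ 2 / (x - y) ^ 2‖ ≤ K ^ 2 := by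
    rw [Real.norm_of_nonneg (by positivity)]
    refine div_le_of_le_mul₀ (sq_nonneg _) (sq_nonneg _) ?_
    simpa only [Real.dist_eq, mul_pow, sq_abs] using
      pow_le_pow_left₀ dist_nonneg (hw.dist_le_mul x (hAs hx) y (hBs hy)) 2
  have inner_le {x : ℝ} (hx : x ∈ A) :
      ‖∫ y in B, (w x - w y) ^ 2 / (x - y) ^ 2‖ ≤ K ^ 2 * volume.real B :=
    norm_setIntegral_le_of_norm_le_const hB fun _ hy ↦ integrand_le hx hy
  calc slobodeckijEnergy w A B
      ≤ K ^ 2 * volume.real B * volume.real A :=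
        (Real.le_norm_self _).trans (norm_setIntegral_le_of_norm_le_const hA fun _ ↦ inner_le)
    _ = K ^ 2 * (volume.real A * volume.real B) := by ring

theorem lipschitzOnWith_Icc_of_Icc_of_Icc {E : Type*} [PseudoMetricSpace E] {f : ℝ → E} {K : ℝ≥0}
    {a b c : ℝ} (hab : LipschitzOnWith K f (Icc a b)) (hbc : LipschitzOnWith K f (Icc b c)) :
    LipschitzOnWith K f (Icc a c) := by
  refine .of_dist_le_mul fun x hx y hy ↦ ?_
  wlog hxy : x ≤ y generalizing x y
  · simpa only [dist_comm] using this y hy x hx (le_of_not_ge hxy)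
  rcases le_total y b with hyb | hby
  · exact hab.dist_le_mul x ⟨hx.1, hxy.trans hyb⟩ y ⟨hy.1, hyb⟩
  rcases le_total b x with hbx | hxb
  · exact hbc.dist_le_mul x ⟨hbx, hx.2⟩ y ⟨hby, hy.2⟩
  calc dist (f x) (f y)
      ≤ dist (f x) (f b) + dist (f b) (f y) := dist_triangle _ _ _
    _ ≤ K * dist x b + K * dist b y :=
        add_le_add (hab.dist_le_mul x ⟨hx.1, hxb⟩ b ⟨hx.1.trans hxb, le_rfl⟩)
          (hbc.dist_le_mul b ⟨le_rfl, hby.trans hy.2⟩ y ⟨hby, hy.2⟩)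
    _ = K * dist x y := by
        rw [← mul_add, Real.dist_eq, Real.dist_eq, Real.dist_eq, abs_of_nonpos (sub_nonpos.mpr hxb),
          abs_of_nonpos (sub_nonpos.mpr hby), abs_of_nonpos (sub_nonpos.mpr hxy)]
        ring

end Slobodeckij

section AdjacentElements

/-- The indices of the elements of a mesh with `r` elements that are equal or adjacent to the
element of index `i`; elements are counted from `0`, so that `i` stands for `(ξ i, ξ (i + 1))`. -/
def adjacentElements (r i : ℕ) : Finset ℕ :=
  (Finset.range r).filter fun j ↦ j ≤ i + 1 ∧ i ≤ j + 1

variable {r i j : ℕ}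

theorem mem_adjacentElements : j ∈ adjacentElements r i ↔ j < r ∧ j ≤ i + 1 ∧ i ≤ j + 1 := by
  rw [adjacentElements, Finset.mem_filter, Finset.mem_range]

theorem lt_of_mem_adjacentElements (h : j ∈ adjacentElements r i) : j < r :=
  (mem_adjacentElements.mp h).1

theorem mem_adjacentElements_symm (hi : i < r) (h : j ∈ adjacentElements r i) :
    i ∈ adjacentElements r j :=
  mem_adjacentElements.mpr ⟨hi, (mem_adjacentElements.mp h).2.symm⟩

theorem card_adjacentElements_le (r i : ℕ) : #(adjacentElements r i) ≤ 3 := by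
  have subset_Icc : adjacentElements r i ⊆ Finset.Icc (i - 1) (i + 1) := fun j hj ↦ by
    rw [mem_adjacentElements] at hj
    exact Finset.mem_Icc.mpr (by lia)
  exact (Finset.card_le_card subset_Icc).trans (by rw [Nat.card_Icc]; lia)

theorem sum_sum_add_le_of_card_le {ι : Type*} {s : Finset ι} {N : ι → Finset ι} {d : ℕ}
    (hN : ∀ i ∈ s, ∀ j ∈ N i, j ∈ s ∧ i ∈ N j) (hd : ∀ i ∈ s, #(N i) ≤ d) {f : ι → ℝ}
    (hf : ∀ i ∈ s, 0 ≤ f i) :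
    ∑ i ∈ s, ∑ j ∈ N i, (f i + f j) ≤ 2 * d * ∑ i ∈ s, f i := by
  have swap : ∑ i ∈ s, ∑ j ∈ N i, f j = ∑ i ∈ s, ∑ _ ∈ N i, f i :=
    Finset.sum_comm' fun i j ↦
      ⟨fun ⟨hi, hj⟩ ↦ (hN i hi j hj).symm, fun ⟨hi, hj⟩ ↦ hN j hj i hi⟩
  have degree_bound : ∑ i ∈ s, ∑ _ ∈ N i, f i ≤ d * ∑ i ∈ s, f i := by
    rw [Finset.mul_sum]
    refine Finset.sum_le_sum fun i hi ↦ ?_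
    rw [Finset.sum_const, nsmul_eq_mul]
    exact mul_le_mul_of_nonneg_right (mod_cast hd i hi) (hf i hi)
  simp only [Finset.sum_add_distrib, swap]
  linarith

end AdjacentElements

theorem max_sq_mul_mul_le {K L h g c : ℝ} (hh : 0 ≤ h) (hg : 0 ≤ g) (hhg : h ≤ c * g)
    (hgh : g ≤ c * h) : max K L ^ 2 * (h * g) ≤ c * ((K * h) ^ 2 + (L * g) ^ 2) := by
  have max_sq_le : max K L ^ 2 ≤ K ^ 2 + L ^ 2 := by
    rcases max_choice K L with hmax | hmax <;> rw [hmax] <;> linarith [sq_nonneg K, sq_nonneg L]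
  calc max K L ^ 2 * (h * g)
      ≤ (K ^ 2 + L ^ 2) * (h * g) := by gcongr
    _ = K ^ 2 * h * g + L ^ 2 * g * h := by ring
    _ ≤ K ^ 2 * h * (c * h) + L ^ 2 * g * (c * g) := by gcongr
    _ = c * ((K * h) ^ 2 + (L * g) ^ 2) := by ring

section Mesh

variable {r i j : ℕ} {ξ : ℕ → ℝ} {w : ℝ → ℝ} {K : ℕ → ℝ≥0}

theorem exists_lipschitzOnWith_max_of_mem_adjacentElements
    (hmono : ∀ i < r, ξ i ≤ ξ (i + 1))
    (hK : ∀ i < r, LipschitzOnWith (K i) w (Icc (ξ i) (ξ (i + 1))))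
    (hi : i < r) (hj : j ∈ adjacentElements r i) :
    ∃ s, Ioo (ξ i) (ξ (i + 1)) ⊆ s ∧ Ioo (ξ j) (ξ (j + 1)) ⊆ s ∧
      LipschitzOnWith (max (K i) (K j)) w s := by
  obtain ⟨hjr, hji, hij⟩ := mem_adjacentElements.mp hj
  have hKi := (hK i hi).weaken (le_max_left (K i) (K j))
  have hKj := (hK j hjr).weaken (le_max_right (K i) (K j))
  obtain rfl | rfl | rfl : j = i ∨ j = i + 1 ∨ i = j + 1 := by lia
  · exact ⟨_, Ioo_subset_Icc_self, Ioo_subset_Icc_self, hKi⟩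
  · exact ⟨_, Ioo_subset_Icc_self.trans (Icc_subset_Icc_right (hmono _ hjr)),
      Ioo_subset_Icc_self.trans (Icc_subset_Icc_left (hmono _ hi)),
      lipschitzOnWith_Icc_of_Icc_of_Icc hKi hKj⟩
  · exact ⟨_, Ioo_subset_Icc_self.trans (Icc_subset_Icc_left (hmono _ hjr)),
      Ioo_subset_Icc_self.trans (Icc_subset_Icc_right (hmono _ hi)),
      lipschitzOnWith_Icc_of_Icc_of_Icc hKj hKi⟩

theorem slobodeckijEnergy_le_of_mem_adjacentElements {c : ℝ} (hmono : ∀ i < r, ξ i ≤ ξ (i + 1))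
    (hqu : ∀ i < r, ∀ j ∈ adjacentElements r i, ξ (i + 1) - ξ i ≤ c * (ξ (j + 1) - ξ j))
    (hK : ∀ i < r, LipschitzOnWith (K i) w (Icc (ξ i) (ξ (i + 1))))
    (hi : i < r) (hj : j ∈ adjacentElements r i) :
    slobodeckijEnergy w (Ioo (ξ i) (ξ (i + 1))) (Ioo (ξ j) (ξ (j + 1))) ≤
      c * ((K i * (ξ (i + 1) - ξ i)) ^ 2 + (K j * (ξ (j + 1) - ξ j)) ^ 2) := by
  have hjr := lt_of_mem_adjacentElements hj
  obtain ⟨s, his, hjs, hw⟩ := exists_lipschitzOnWith_max_of_mem_adjacentElements hmono hK hi hj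
  calc slobodeckijEnergy w (Ioo (ξ i) (ξ (i + 1))) (Ioo (ξ j) (ξ (j + 1)))
      ≤ max (K i : ℝ) (K j) ^ 2 * ((ξ (i + 1) - ξ i) * (ξ (j + 1) - ξ j)) := by
        simpa only [Real.volume_real_Ioo_of_le (hmono i hi),
          Real.volume_real_Ioo_of_le (hmono j hjr), NNReal.coe_max] using
          slobodeckijEnergy_le_of_lipschitzOnWith hw his hjs measure_Ioo_lt_top measure_Ioo_lt_top
    _ ≤ _ := max_sq_mul_mul_le (sub_nonneg.mpr (hmono i hi)) (sub_nonneg.mpr (hmono j hjr))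
        (hqu i hi j hj) (hqu j hjr i (mem_adjacentElements_symm hi hj))

theorem sum_slobodeckijEnergy_adjacentElements_le {c : ℝ} (hc : 0 ≤ c)
    (hmono : ∀ i < r, ξ i ≤ ξ (i + 1))
    (hqu : ∀ i < r, ∀ j ∈ adjacentElements r i, ξ (i + 1) - ξ i ≤ c * (ξ (j + 1) - ξ j))
    (hK : ∀ i < r, LipschitzOnWith (K i) w (Icc (ξ i) (ξ (i + 1)))) :
    ∑ i ∈ Finset.range r, ∑ j ∈ adjacentElements r i,
        slobodeckijEnergy w (Ioo (ξ i) (ξ (i + 1))) (Ioo (ξ j) (ξ (j + 1))) ≤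
      6 * c * ∑ i ∈ Finset.range r, (K i * (ξ (i + 1) - ξ i)) ^ 2 := by
  let f (i : ℕ) : ℝ := (K i * (ξ (i + 1) - ξ i)) ^ 2
  have double_count := sum_sum_add_le_of_card_le (s := Finset.range r) (N := adjacentElements r)
    (fun i hi j hj ↦ ⟨Finset.mem_range.mpr (lt_of_mem_adjacentElements hj),
      mem_adjacentElements_symm (Finset.mem_range.mp hi) hj⟩)
    (fun i _ ↦ card_adjacentElements_le r i) (f := f) (fun _ _ ↦ sq_nonneg _)
  calc _ ≤ ∑ i ∈ Finset.range r, ∑ j ∈ adjacentElements r i, c * (f i + f j) :=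
        Finset.sum_le_sum fun i hi ↦ Finset.sum_le_sum fun j hj ↦
          slobodeckijEnergy_le_of_mem_adjacentElements hmono hqu hK (Finset.mem_range.mp hi) hj
    _ = c * ∑ i ∈ Finset.range r, ∑ j ∈ adjacentElements r i, (f i + f j) := by
        simp only [Finset.mul_sum]
    _ ≤ c * (2 * (3 : ℕ) * ∑ i ∈ Finset.range r, f i) := mul_le_mul_of_nonneg_left double_count hc
    _ = 6 * c * ∑ i ∈ Finset.range r, f i := by push_cast; ring

theorem Icc_mesh_subset (hmono : ∀ i < r, ξ i ≤ ξ (i + 1)) (hi : i < r) :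
    Icc (ξ i) (ξ (i + 1)) ⊆ Icc (ξ 0) (ξ r) := by
  have hξ : MonotoneOn ξ (Iic r) :=
    monotoneOn_of_le_add_one ordConnected_Iic fun i _ _ hi ↦ hmono i hi
  exact Icc_subset_Icc (hξ (Nat.zero_le r) hi.le (Nat.zero_le i)) (hξ hi (le_refl r) hi)

end Mesh

theorem adjacent_pairs_bound_general (cBar : ℝ) (hc : 1 ≤ cBar) (k : ℕ) :
    ∃ C : ℝ, 0 < C ∧
      ∀ (r : ℕ) (ξ : ℕ → ℝ), (∀ i < r, ξ i < ξ (i + 1)) →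
        (∀ i < r, ∀ j ∈ adjacentElements r i, ξ (i + 1) - ξ i ≤ cBar * (ξ (j + 1) - ξ j)) →
        ∀ w : ℝ → ℝ, ContinuousOn w (Icc (ξ 0) (ξ r)) →
        (∀ i < r, ∃ p : ℝ[X], p.natDegree ≤ k ∧ ∀ t ∈ Ioo (ξ i) (ξ (i + 1)), w t = p.eval t) →
        ∑ i ∈ Finset.range r, ∑ j ∈ adjacentElements r i,
            slobodeckijEnergy w (Ioo (ξ i) (ξ (i + 1))) (Ioo (ξ j) (ξ (j + 1))) ≤
          C * ∑ i ∈ Finset.range r, (sSup ((fun t ↦ |w t|) '' Ioo (ξ i) (ξ (i + 1)))) ^ 2 := by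
  obtain ⟨M, hM⟩ := exists_lipschitzOnWith_mul_sub_le_sSup k
  refine ⟨6 * cBar * (M ^ 2 + 1), by positivity, fun r ξ hmono hqu w hcont hpoly ↦ ?_⟩
  have hle (i : ℕ) (hi : i < r) : ξ i ≤ ξ (i + 1) := (hmono i hi).le
  have inverse_estimate (i : ℕ) (hi : i < r) :=
    hM _ _ (hmono i hi) w (hcont.mono (Icc_mesh_subset hle hi)) (hpoly i hi)
  choose! K hK hKM using inverse_estimate
  set S : ℕ → ℝ := fun i ↦ sSup ((fun t ↦ |w t|) '' Ioo (ξ i) (ξ (i + 1)))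
  calc _ ≤ 6 * cBar * ∑ i ∈ Finset.range r, (K i * (ξ (i + 1) - ξ i)) ^ 2 :=
        sum_slobodeckijEnergy_adjacentElements_le (by positivity) hle hqu hK
    _ ≤ 6 * cBar * ∑ i ∈ Finset.range r, (M * S i) ^ 2 := by
        gcongr 6 * cBar * ∑ i ∈ _, ?_ ^ 2 with i hi
        · exact mul_nonneg (K i).coe_nonneg (sub_nonneg.mpr (hle i (Finset.mem_range.mp hi)))
        · exact hKM i (Finset.mem_range.mp hi)
    _ = 6 * cBar * M ^ 2 * ∑ i ∈ Finset.range r, S i ^ 2 := by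
        simp only [mul_pow, ← Finset.mul_sum, mul_assoc]
    _ ≤ 6 * cBar * (M ^ 2 + 1) * ∑ i ∈ Finset.range r, S i ^ 2 := by
        gcongr
        exact le_add_of_nonneg_right zero_le_one

/-- For every `cBar ≥ 1` and `k ∈ ℕ` there is `C > 0` (depending only on
`cBar` and `k`) such that for every compact interval `[a,b]`, every quasi-uniform mesh of
`[a,b]` with constant `cBar`, and every continuous piecewise polynomial `w` of degree `≤ k`,
the sum over all pairs of equal or adjacent elements of the double integrals of
`(w(x)-w(y))²/(x-y)²` is bounded by `C · Σ_i (sup_{e_i} |w|)²`. -/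
theorem adjacent_pairs_bound (cBar : ℝ) (hc : 1 ≤ cBar) (k : ℕ) :
    ∃ C : ℝ, 0 < C ∧
      ∀ (a b : ℝ) (_hab : a < b) (r : ℕ) (_hr : 0 < r) (ξ : ℕ → ℝ)
        (_h0 : ξ 0 = a) (_hr' : ξ r = b) (_hmono : ∀ i < r, ξ i < ξ (i + 1))
        -- quasi-uniformity: the ratio of any two element lengths is at most `cBar`
        (_hqu : ∀ i < r, ∀ j < r, ξ (i + 1) - ξ i ≤ cBar * (ξ (j + 1) - ξ j))
        (w : ℝ → ℝ) (_hcont : ContinuousOn w (Icc a b))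
        -- `w ∈ 𝕊_k(𝒯)`
        (_hpoly : ∀ i < r, ∃ p : Polynomial ℝ, p.natDegree ≤ k ∧
          ∀ t ∈ Ioo (ξ i) (ξ (i + 1)), w t = p.eval t),
        (∑ i ∈ Finset.range r,
            ∑ j ∈ (Finset.range r).filter (fun j => j ≤ i + 1 ∧ i ≤ j + 1),
              ∫ s in Ioo (ξ i) (ξ (i + 1)), ∫ t in Ioo (ξ j) (ξ (j + 1)),
                (w s - w t) ^ 2 / (s - t) ^ 2) ≤
          C * ∑ i ∈ Finset.range r,
              (sSup ((fun t => |w t|) '' Ioo (ξ i) (ξ (i + 1)))) ^ 2 := by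
  obtain ⟨C, hC, h⟩ := adjacent_pairs_bound_general cBar hc k
  exact ⟨C, hC, fun a b _ r _ ξ h0 hr hmono hqu w hw hp ↦ h r ξ hmono
    (fun i hi j hj ↦ hqu i hi j (lt_of_mem_adjacentElements hj)) w (by rwa [h0, hr]) hp⟩
end
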